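/- arXiv:0804.1733 — 6 statements merged into one kernel-verified Lean document; each statement's English description precedes it below -/
import Mathlib

section
/- Let B be an envelope of the Banach algebra A, X a Banach B-bimodule, and D : A → X a bounded derivation (with respect to the restricted A-actions). The formulas b·(L, R) = (a ↦ b·L(a), a ↦ R(ab)) and (L, R)·b = (a ↦ L(ba), a ↦ R(a)·b) make the space Δ(X) of double centralizers from A into X a Banach B-bimodule, and the map D̃ : B → Δ(X) defined by D̃(b) = (𝓛(b), 𝓡(b)), where 𝓛(b)(a) = D(ba) − b·D(a) and 𝓡(b)(a) = D(ab) − D(a)·b, is a bounded derivation satisfying D̃(ι(a)) = ι_X(D(a)) for all a ∈ A (where ι : A → B is the inclusion); that is, the push-out diagram commutes. -/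
noncomputable section

/-- A Banach `A`-bimodule structure on a Banach space `X`: bounded bilinear left and right
actions (encoded as continuous linear maps `l`, `r`, where `l a x = a·x` and `r a x = x·a`)
satisfying `(ab)·x = a·(b·x)`, `x·(ab) = (x·a)·b` and `(a·x)·b = a·(x·b)`. -/
structure BanachBimodule (A X : Type*) [NonUnitalNormedRing A] [NormedSpace ℂ A]
    [NormedAddCommGroup X] [NormedSpace ℂ X] where
  l : A →L[ℂ] X →L[ℂ] X
  r : A →L[ℂ] X →L[ℂ] X
  l_mul : ∀ a b x, l (a * b) x = l a (l b x)
  r_mul : ∀ a b x, r (a * b) x = r b (r a x)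
  l_r : ∀ a b x, r b (l a x) = l a (r b x)

variable {A X : Type*} [NonUnitalNormedRing A] [NormedSpace ℂ A]
  [IsScalarTower ℂ A A] [SMulCommClass ℂ A A] [CompleteSpace A]
  [NormedAddCommGroup X] [NormedSpace ℂ X] [CompleteSpace X]

/-- `(S, T)` is a double centralizer from `A` into `X`:
`S(αa) = S(α)·a`, `T(aα) = a·T(α)` and `a·S(α) = T(a)·α`. -/
def IsDoubleCentralizer (M : BanachBimodule A X) (S T : A →L[ℂ] X) : Prop :=
  (∀ α a : A, S (α * a) = M.r a (S α)) ∧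
  (∀ a α : A, T (a * α) = M.l a (T α)) ∧
  (∀ a α : A, M.l a (S α) = M.r α (T a))

/-- The canonical bounded linear map `ι_X : x ↦ (L_x, R_x)` where `L_x a = x·a`,
`R_x a = a·x`. -/
def iotaDC (M : BanachBimodule A X) : X →L[ℂ] (A →L[ℂ] X) × (A →L[ℂ] X) :=
  M.r.flip.prod M.l.flip

/-- `B` is an *envelope* of `A`: `A` is a two-sided ideal of `B` with bounded injective
inclusion `incl : A → B be` (an algebra homomorphism), the products `ba` and `ab`
(`b ∈ B`, `a ∈ A`) are given by `lmul b a` and `rmul b a` inside `A`, and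
`max (‖ba‖, ‖ab‖) ≤ C·‖a‖·‖b‖` for some `C > 0`. -/
structure Envelope (A B : Type*) [NonUnitalNormedRing A] [NormedSpace ℂ A]
    [NonUnitalNormedRing B] [NormedSpace ℂ B] where
  incl : A →L[ℂ] B
  incl_mul : ∀ a c : A, incl (a * c) = incl a * incl c
  incl_inj : Function.Injective incl
  lmul : B →L[ℂ] A →L[ℂ] A
  rmul : B →L[ℂ] A →L[ℂ] A
  incl_lmul : ∀ (b : B) (a : A), incl (lmul b a) = b * incl a
  incl_rmul : ∀ (b : B) (a : A), incl (rmul b a) = incl a * b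
  norm_bound : ∃ C > 0, ∀ (b : B) (a : A), max ‖lmul b a‖ ‖rmul b a‖ ≤ C * ‖a‖ * ‖b‖

variable {B : Type*} [NonUnitalNormedRing B] [NormedSpace ℂ B]
  [IsScalarTower ℂ B B] [SMulCommClass ℂ B B] [CompleteSpace B]

/-- Restriction of a Banach `B`-bimodule structure along the inclusion `A → B`,
making `X` a Banach `A`-bimodule. -/
def BanachBimodule.restrict (M : BanachBimodule B X) (E : Envelope A B) :
    BanachBimodule A X where
  l := M.l.comp E.incl
  r := M.r.comp E.incl
  l_mul := by
    intro a b x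
    simp only [ContinuousLinearMap.comp_apply, E.incl_mul, M.l_mul]
  r_mul := by
    intro a b x
    simp only [ContinuousLinearMap.comp_apply, E.incl_mul, M.r_mul]
  l_r := by
    intro a b x
    simp only [ContinuousLinearMap.comp_apply, M.l_r]

/-- The left `B`-action `b·(L, R) = (a ↦ b·L(a), a ↦ R(ab))` on pairs. -/
def bSmulLeft (E : Envelope A B) (M : BanachBimodule B X) (b : B)
    (p : (A →L[ℂ] X) × (A →L[ℂ] X)) : (A →L[ℂ] X) × (A →L[ℂ] X) :=
  ((M.l b).comp p.1, p.2.comp (E.rmul b))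

/-- The right `B`-action `(L, R)·b = (a ↦ L(ba), a ↦ R(a)·b)` on pairs. -/
def bSmulRight (E : Envelope A B) (M : BanachBimodule B X)
    (p : (A →L[ℂ] X) × (A →L[ℂ] X)) (b : B) : (A →L[ℂ] X) × (A →L[ℂ] X) :=
  (p.1.comp (E.lmul b), (M.r b).comp p.2)

/-- The push-out map `D̃ : b ↦ (𝓛(b), 𝓡(b))`, with `𝓛(b)(a) = D(ba) − b·D(a)` and
`𝓡(b)(a) = D(ab) − D(a)·b`. -/
def pushOut (E : Envelope A B) (M : BanachBimodule B X) (D : A →L[ℂ] X) (b : B) :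
    (A →L[ℂ] X) × (A →L[ℂ] X) :=
  (D.comp (E.lmul b) - (M.l b).comp D, D.comp (E.rmul b) - (M.r b).comp D)

/-- The `B`-actions make `Δ(X)` a Banach `B`-bimodule, and the push-out map
`D̃ : B → Δ(X)` is a bounded derivation with `D̃(ι(a)) = ι_X(D(a))` for `a ∈ A`. -/
theorem statement5 (E : Envelope A B) (M : BanachBimodule B X) (D : A →L[ℂ] X)
    (hD : ∀ a c : A, D (a * c) = M.l (E.incl a) (D c) + M.r (E.incl c) (D a)) :
    -- the actions leave `Δ(X)` invariant:
    (∀ (b : B) (p : (A →L[ℂ] X) × (A →L[ℂ] X)),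
      IsDoubleCentralizer (M.restrict E) p.1 p.2 →
        IsDoubleCentralizer (M.restrict E) (bSmulLeft E M b p).1 (bSmulLeft E M b p).2 ∧
        IsDoubleCentralizer (M.restrict E) (bSmulRight E M p b).1 (bSmulRight E M p b).2) ∧
    -- the bimodule axioms hold:
    (∀ (b₁ b₂ : B) (p : (A →L[ℂ] X) × (A →L[ℂ] X)),
      bSmulLeft E M (b₁ * b₂) p = bSmulLeft E M b₁ (bSmulLeft E M b₂ p) ∧
      bSmulRight E M p (b₁ * b₂) = bSmulRight E M (bSmulRight E M p b₁) b₂ ∧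
      bSmulRight E M (bSmulLeft E M b₁ p) b₂ = bSmulLeft E M b₁ (bSmulRight E M p b₂)) ∧
    -- the actions are bounded (Banach bimodule):
    (∃ C : ℝ, ∀ (b : B) (p : (A →L[ℂ] X) × (A →L[ℂ] X)),
      ‖bSmulLeft E M b p‖ ≤ C * ‖b‖ * ‖p‖ ∧ ‖bSmulRight E M p b‖ ≤ C * ‖b‖ * ‖p‖) ∧
    -- `D̃` takes values in `Δ(X)`:
    (∀ b : B, IsDoubleCentralizer (M.restrict E) (pushOut E M D b).1 (pushOut E M D b).2) ∧
    -- `D̃` is bounded and linear: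
    (∀ b₁ b₂ : B, pushOut E M D (b₁ + b₂) = pushOut E M D b₁ + pushOut E M D b₂) ∧
    (∀ (c : ℂ) (b : B), pushOut E M D (c • b) = c • pushOut E M D b) ∧
    (∃ K : ℝ, ∀ b : B, ‖pushOut E M D b‖ ≤ K * ‖b‖) ∧
    -- `D̃` is a derivation:
    (∀ b₁ b₂ : B, pushOut E M D (b₁ * b₂) =
      bSmulLeft E M b₁ (pushOut E M D b₂) + bSmulRight E M (pushOut E M D b₁) b₂) ∧
    -- the push-out diagram commutes:
    (∀ a : A, pushOut E M D (E.incl a) = iotaDC (M.restrict E) (D a)) := by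
  have h1 : ∀ (b : B) (a c : A), E.lmul b (a * c) = E.lmul b a * c := fun b a c =>
    E.incl_inj (by simp only [E.incl_mul, E.incl_lmul, mul_assoc])
  have h2 : ∀ (b : B) (a c : A), E.rmul b (a * c) = a * E.rmul b c := fun b a c =>
    E.incl_inj (by simp only [E.incl_mul, E.incl_rmul, mul_assoc])
  have h3 : ∀ (b : B) (a c : A), E.rmul b a * c = a * E.lmul b c := fun b a c =>
    E.incl_inj (by simp only [E.incl_mul, E.incl_rmul, E.incl_lmul, mul_assoc])
  have h4 : ∀ (b d : B) (a : A), E.lmul (b * d) a = E.lmul b (E.lmul d a) := fun b d a =>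
    E.incl_inj (by simp only [E.incl_lmul, mul_assoc])
  have h5 : ∀ (b d : B) (a : A), E.rmul (b * d) a = E.rmul d (E.rmul b a) := fun b d a =>
    E.incl_inj (by simp only [E.incl_rmul, mul_assoc])
  have h6 : ∀ (b d : B) (a : A), E.rmul d (E.lmul b a) = E.lmul b (E.rmul d a) :=
    fun b d a => E.incl_inj (by simp only [E.incl_rmul, E.incl_lmul, mul_assoc])
  have h7 : ∀ a c : A, E.lmul (E.incl a) c = a * c := fun a c =>
    E.incl_inj (by simp only [E.incl_lmul, E.incl_mul])
  have h8 : ∀ a c : A, E.rmul (E.incl a) c = c * a := fun a c =>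
    E.incl_inj (by simp only [E.incl_rmul, E.incl_mul])
  refine ⟨?_, ?_, ?_, ?_, ?_, ?_, ?_, ?_, ?_⟩
  · rintro b ⟨S, T⟩ ⟨hS, hT, hST⟩
    simp only [BanachBimodule.restrict, ContinuousLinearMap.comp_apply] at hS hT hST
    refine ⟨⟨?_, ?_, ?_⟩, ⟨?_, ?_, ?_⟩⟩ <;> intro a c <;>
      simp only [BanachBimodule.restrict, bSmulLeft, bSmulRight, ContinuousLinearMap.comp_apply]
    · rw [hS, M.l_r]
    · rw [h2, hT]
    · rw [← hST, E.incl_rmul, M.l_mul]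
    · rw [h1, hS]
    · rw [hT, M.l_r]
    · rw [hST, E.incl_lmul, M.r_mul]
  · rintro b₁ b₂ ⟨S, T⟩
    refine ⟨?_, ?_, ?_⟩ <;> refine Prod.ext ?_ ?_ <;> ext a <;>
      simp only [bSmulLeft, bSmulRight, ContinuousLinearMap.comp_apply, M.l_mul, M.r_mul, h4, h5]
  · refine ⟨max (max ‖M.l‖ ‖M.r‖) (max ‖E.lmul‖ ‖E.rmul‖), fun b p => ?_⟩
    set C := max (max ‖M.l‖ ‖M.r‖) (max ‖E.lmul‖ ‖E.rmul‖) with hC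
    have c1 : ‖M.l‖ ≤ C := by simp [hC]
    have c2 : ‖M.r‖ ≤ C := by simp [hC]
    have c3 : ‖E.lmul‖ ≤ C := by simp [hC]
    have c4 : ‖E.rmul‖ ≤ C := by simp [hC]
    have p1 : ‖p.1‖ ≤ ‖p‖ := norm_fst_le p
    have p2 : ‖p.2‖ ≤ ‖p‖ := norm_snd_le p
    have C0 : 0 ≤ C := le_trans (norm_nonneg M.l) c1
    have d1 : ‖M.l b‖ ≤ C * ‖b‖ := M.l.le_of_opNorm_le c1 b
    have d2 : ‖M.r b‖ ≤ C * ‖b‖ := M.r.le_of_opNorm_le c2 b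
    have d3 : ‖E.lmul b‖ ≤ C * ‖b‖ := E.lmul.le_of_opNorm_le c3 b
    have d4 : ‖E.rmul b‖ ≤ C * ‖b‖ := E.rmul.le_of_opNorm_le c4 b
    have k0 : 0 ≤ C * ‖b‖ := by positivity
    constructor
    · refine norm_prod_le_iff.2 ⟨?_, ?_⟩
      · exact (ContinuousLinearMap.opNorm_comp_le _ _).trans
          (mul_le_mul d1 p1 (norm_nonneg _) k0)
      · refine (ContinuousLinearMap.opNorm_comp_le _ _).trans ?_
        rw [mul_comm]
        exact mul_le_mul d4 p2 (norm_nonneg _) k0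
    · refine norm_prod_le_iff.2 ⟨?_, ?_⟩
      · refine (ContinuousLinearMap.opNorm_comp_le _ _).trans ?_
        rw [mul_comm]
        exact mul_le_mul d3 p1 (norm_nonneg _) k0
      · exact (ContinuousLinearMap.opNorm_comp_le _ _).trans
          (mul_le_mul d2 p2 (norm_nonneg _) k0)
  · intro b
    refine ⟨?_, ?_, ?_⟩ <;> intro a c <;>
      simp only [BanachBimodule.restrict, pushOut, ContinuousLinearMap.comp_apply,
        sub_apply, map_sub]
    · rw [h1, hD, hD, E.incl_lmul, M.l_mul, map_add, M.l_r]
      abel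
    · rw [h2, hD, hD, E.incl_rmul, M.r_mul, map_add, M.l_r]
      abel
    · have e := hD (E.rmul b a) c
      rw [h3, hD, E.incl_rmul, E.incl_lmul, M.l_mul, M.r_mul] at e
      rw [sub_eq_sub_iff_add_eq_add, e]
      abel
  · intro b₁ b₂
    refine Prod.ext ?_ ?_ <;> ext a <;> simp [pushOut] <;> abel
  · intro c b
    refine Prod.ext ?_ ?_ <;> ext a <;> simp [pushOut, smul_sub]
  · refine ⟨max (‖D‖ * ‖E.lmul‖ + ‖M.l‖ * ‖D‖) (‖D‖ * ‖E.rmul‖ + ‖M.r‖ * ‖D‖), fun b => ?_⟩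
    refine norm_prod_le_iff.2 ⟨?_, ?_⟩
    · refine le_trans ?_ (mul_le_mul_of_nonneg_right (le_max_left _ _) (norm_nonneg b))
      calc _ ≤ ‖D.comp (E.lmul b)‖ + ‖(M.l b).comp D‖ := norm_sub_le _ _
        _ ≤ ‖D‖ * ‖E.lmul b‖ + ‖M.l b‖ * ‖D‖ := add_le_add
            (ContinuousLinearMap.opNorm_comp_le _ _) (ContinuousLinearMap.opNorm_comp_le _ _)
        _ ≤ ‖D‖ * (‖E.lmul‖ * ‖b‖) + (‖M.l‖ * ‖b‖) * ‖D‖ := by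
            gcongr <;> exact ContinuousLinearMap.le_opNorm _ _
        _ = _ := by ring
    · refine le_trans ?_ (mul_le_mul_of_nonneg_right (le_max_right _ _) (norm_nonneg b))
      calc _ ≤ ‖D.comp (E.rmul b)‖ + ‖(M.r b).comp D‖ := norm_sub_le _ _
        _ ≤ ‖D‖ * ‖E.rmul b‖ + ‖M.r b‖ * ‖D‖ := add_le_add
            (ContinuousLinearMap.opNorm_comp_le _ _) (ContinuousLinearMap.opNorm_comp_le _ _)
        _ ≤ ‖D‖ * (‖E.rmul‖ * ‖b‖) + (‖M.r‖ * ‖b‖) * ‖D‖ := by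
            gcongr <;> exact ContinuousLinearMap.le_opNorm _ _
        _ = _ := by ring
  · intro b₁ b₂
    refine Prod.ext ?_ ?_ <;> ext a <;>
      simp only [pushOut, bSmulLeft, bSmulRight, ContinuousLinearMap.comp_apply,
        sub_apply, add_apply, Prod.fst_add,
        Prod.snd_add, map_sub, h4, h5, M.l_mul, M.r_mul] <;> abel
  · intro a
    refine Prod.ext ?_ ?_ <;> ext c <;>
      simp [pushOut, iotaDC, BanachBimodule.restrict, h7, h8, hD]
end
end

section
/- Let B be an envelope of the Banach algebra A, X a Banach B-bimodule, and D : A → X a bounded derivation. Suppose the closed linear span of {ac : a, c ∈ A} equals A. If Δ : B → Δ(X), Δ(b) = (𝓛(b), 𝓡(b)), is ANY bounded derivation (with respect to the B-bimodule structure b·(L, R) = (a ↦ b·L(a), a ↦ R(ab)), (L, R)·b = (a ↦ L(ba), a ↦ R(a)·b) on the space Δ(X) of double centralizers) satisfying Δ(ι(a)) = ι_X(D(a)) for all a ∈ A, then necessarily 𝓛(b)(a) = D(ba) − b·D(a) and 𝓡(b)(a) = D(ab) − D(a)·b for all b ∈ B, a ∈ A; in other words, the extension D̃ of D to B is uniquely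 determined by D. -/
noncomputable section

variable {A X : Type*} [NonUnitalNormedRing A] [NormedSpace ℂ A]
  [IsScalarTower ℂ A A] [SMulCommClass ℂ A A] [CompleteSpace A]
  [NormedAddCommGroup X] [NormedSpace ℂ X] [CompleteSpace X]

variable {B : Type*} [NonUnitalNormedRing B] [NormedSpace ℂ B]
  [IsScalarTower ℂ B B] [SMulCommClass ℂ B B] [CompleteSpace B]

/-- Uniqueness of the extension: if the closed linear span of products is all of `A` and
`Δ : B → Δ(X)` is ANY bounded derivation satisfying `Δ(ι(a)) = ι_X(D(a))`, then
`Δ(b) = (𝓛(b), 𝓡(b))`, i.e. `Δ(b).1 a = D(ba) − b·D(a)` and `Δ(b).2 a = D(ab) − D(a)·b`. -/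
theorem statement7 (E : Envelope A B) (M : BanachBimodule B X) (D : A →L[ℂ] X)
    (hD : ∀ a c : A, D (a * c) = M.l (E.incl a) (D c) + M.r (E.incl c) (D a))
    (hspan : (Submodule.span ℂ {x : A | ∃ a c : A, a * c = x}).topologicalClosure = ⊤)
    (Δ : B → (A →L[ℂ] X) × (A →L[ℂ] X))
    (hDC : ∀ b : B, IsDoubleCentralizer (M.restrict E) (Δ b).1 (Δ b).2)
    (hadd : ∀ b₁ b₂ : B, Δ (b₁ + b₂) = Δ b₁ + Δ b₂)
    (hsmul : ∀ (c : ℂ) (b : B), Δ (c • b) = c • Δ b)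
    (hbdd : ∃ K : ℝ, ∀ b : B, ‖Δ b‖ ≤ K * ‖b‖)
    (hder : ∀ b₁ b₂ : B,
      Δ (b₁ * b₂) = bSmulLeft E M b₁ (Δ b₂) + bSmulRight E M (Δ b₁) b₂)
    (hcomm : ∀ a : A, Δ (E.incl a) = iotaDC (M.restrict E) (D a)) :
    ∀ (b : B) (a : A),
      (Δ b).1 a = D (E.lmul b a) - M.l b (D a) ∧
      (Δ b).2 a = D (E.rmul b a) - M.r b (D a) := by
  have key : ∀ f g : A →L[ℂ] X, (∀ a c : A, f (a * c) = g (a * c)) → f = g := by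
    intro f g h
    refine ContinuousLinearMap.ext_on
      (s := {x : A | ∃ a c : A, a * c = x}) ?_ ?_
    · exact (Submodule.dense_iff_topologicalClosure_eq_top).2 hspan
    · rintro x ⟨a, c, rfl⟩
      exact h a c
  have hl : ∀ a c : A, E.lmul (E.incl a) c = a * c := fun a c =>
    E.incl_inj (by rw [E.incl_lmul, E.incl_mul])
  have hr : ∀ a c : A, E.rmul (E.incl a) c = c * a := fun a c =>
    E.incl_inj (by rw [E.incl_rmul, E.incl_mul])
  have hlm : ∀ (b : B) (a c : A), E.lmul b (a * c) = E.lmul b a * c := fun b a c =>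
    E.incl_inj (by rw [E.incl_lmul, E.incl_mul, E.incl_mul, E.incl_lmul, mul_assoc])
  have hrm : ∀ (b : B) (a c : A), E.rmul b (a * c) = a * E.rmul b c := fun b a c =>
    E.incl_inj (by rw [E.incl_rmul, E.incl_mul, E.incl_mul, E.incl_rmul, mul_assoc])
  intro b a
  have h1 : (Δ b).1 = D.comp (E.lmul b) - (M.l b).comp D := by
    apply key
    intro a c
    have h := hder b (E.incl a)
    rw [← E.incl_lmul, hcomm, hcomm] at h
    have h' : M.r (E.incl c) (D (E.lmul b a)) =
        M.l b (M.r (E.incl c) (D a)) + (Δ b).1 (E.lmul (E.incl a) c) :=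
      DFunLike.congr_fun (congrArg Prod.fst h) c
    rw [hl] at h'
    change (Δ b).1 (a * c) = D (E.lmul b (a * c)) - M.l b (D (a * c))
    rw [hlm, hD, hD, h', map_add, E.incl_lmul, M.l_mul]
    abel
  have h2 : (Δ b).2 = D.comp (E.rmul b) - (M.r b).comp D := by
    apply key
    intro c a
    have h := hder (E.incl a) b
    rw [← E.incl_rmul, hcomm, hcomm] at h
    have h' : M.l (E.incl c) (D (E.rmul b a)) =
        (Δ b).2 (E.rmul (E.incl a) c) + M.r b (M.l (E.incl c) (D a)) :=
      DFunLike.congr_fun (congrArg Prod.snd h) c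
    rw [hr] at h'
    change (Δ b).2 (c * a) = D (E.rmul b (c * a)) - M.r b (D (c * a))
    rw [hrm, hD, hD, h', map_add, E.incl_rmul, M.r_mul]
    abel
  rw [h1, h2]
  exact ⟨rfl, rfl⟩
end
end

section
/- Let B be an envelope of the Banach algebra A, X a Banach B-bimodule, D : A → X a bounded derivation, and D̃ : B → Δ(X) the push-out derivation given by D̃(b) = (a ↦ D(ba) − b·D(a), a ↦ D(ab) − D(a)·b). Suppose the closed linear span of {ac : a, c ∈ A} equals A. If D̃ is inner, i.e. there exists a double centralizer (S, T) ∈ Δ(X) with D̃(b) = (S, T)·b − b·(S, T) for all b ∈ B (actions b·(L, R) = (a ↦ b·L(a), a ↦ R(ab)), (L, R)·b = (a ↦ L(ba), a ↦ R(a)·b)), then D(a) = S(a) − T(a) for all a ∈ A. -/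
noncomputable section

variable {A X : Type*} [NonUnitalNormedRing A] [NormedSpace ℂ A]
  [IsScalarTower ℂ A A] [SMulCommClass ℂ A A] [CompleteSpace A]
  [NormedAddCommGroup X] [NormedSpace ℂ X] [CompleteSpace X]

variable {B : Type*} [NonUnitalNormedRing B] [NormedSpace ℂ B]
  [IsScalarTower ℂ B B] [SMulCommClass ℂ B B] [CompleteSpace B]

/-- If the closed linear span of products is all of `A` and the push-out derivation `D̃` is
inner, implemented by a double centralizer `(S, T)`, then `D(a) = S(a) − T(a)` on `A`. -/
theorem statement8 (E : Envelope A B) (M : BanachBimodule B X) (D : A →L[ℂ] X)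
    (hD : ∀ a c : A, D (a * c) = M.l (E.incl a) (D c) + M.r (E.incl c) (D a))
    (hspan : (Submodule.span ℂ {x : A | ∃ a c : A, a * c = x}).topologicalClosure = ⊤)
    (S T : A →L[ℂ] X)
    (hST : IsDoubleCentralizer (M.restrict E) S T)
    (hinner : ∀ b : B,
      pushOut E M D b = bSmulRight E M (S, T) b - bSmulLeft E M b (S, T)) :
    ∀ a : A, D a = S a - T a := by
  obtain ⟨h1, h2, h3⟩ := hST
  have hl : ∀ a c : A, E.lmul (E.incl a) c = a * c := fun a c =>
    E.incl_inj (by rw [E.incl_lmul, E.incl_mul])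
  have hr : ∀ a c : A, E.rmul (E.incl a) c = c * a := fun a c =>
    E.incl_inj (by rw [E.incl_rmul, E.incl_mul])
  have key : ∀ a c : A, D (a * c) = S (a * c) - T (a * c) := by
    intro a c
    have e1 : D (E.lmul (E.incl a) c) - M.l (E.incl a) (D c)
        = S (E.lmul (E.incl a) c) - M.l (E.incl a) (S c) :=
      congrArg (fun p : (A →L[ℂ] X) × (A →L[ℂ] X) => p.1 c) (hinner (E.incl a))
    have e2 : D (E.rmul (E.incl c) a) - M.r (E.incl c) (D a)
        = M.r (E.incl c) (T a) - T (E.rmul (E.incl c) a) :=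
      congrArg (fun p : (A →L[ℂ] X) × (A →L[ℂ] X) => p.2 a) (hinner (E.incl c))
    have e3 : M.l (E.incl a) (S c) = M.r (E.incl c) (T a) := h3 a c
    rw [hl, e3] at e1
    rw [hr] at e2
    have e4 := hD a c
    have e5 : D (a * c) = (D (a * c) - M.l (E.incl a) (D c))
        + (D (a * c) - M.r (E.incl c) (D a)) := by
      rw [e4]; abel
    rw [e5, e1, e2]; abel
  have hle : (Submodule.span ℂ {x : A | ∃ a c : A, a * c = x}).topologicalClosure
      ≤ (D - (S - T)).ker := by
    apply Submodule.topologicalClosure_minimal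
    · rw [Submodule.span_le]
      rintro _ ⟨a, c, rfl⟩
      show (D - (S - T)) (a * c) = 0
      simp [key a c]
    · exact (D - (S - T)).isClosed_ker
  intro a
  have ha : a ∈ (D - (S - T)).ker := hle (hspan ▸ Submodule.mem_top)
  have ha' : D a - (S a - T a) = 0 := ha
  exact sub_eq_zero.mp ha'
end
end

section
/- Let B be an amenable Banach algebra and let A ⊆ B be a closed two-sided ideal. If A has a bounded approximate identity, then A is amenable: for every Banach A-bimodule X and every bounded derivation D : A → X*, there exists φ ∈ X* with D(a) = a·φ − φ·a for all a ∈ A. -/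
noncomputable section

variable {A X : Type*} [NonUnitalNormedRing A] [NormedSpace ℂ A]
  [IsScalarTower ℂ A A] [SMulCommClass ℂ A A] [CompleteSpace A]
  [NormedAddCommGroup X] [NormedSpace ℂ X] [CompleteSpace X]

variable {B : Type*} [NonUnitalNormedRing B] [NormedSpace ℂ B]
  [IsScalarTower ℂ B B] [SMulCommClass ℂ B B] [CompleteSpace B]

/-- A bounded approximate identity for `A`. -/
def HasBAI (A : Type*) [NonUnitalNormedRing A] [NormedSpace ℂ A] : Prop :=
  ∃ (ι : Type) (p : Filter ι) (e : ι → A), p.NeBot ∧ (∃ C : ℝ, ∀ i, ‖e i‖ ≤ C) ∧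
    ∀ a : A, Filter.Tendsto (fun i => e i * a) p (nhds a) ∧
      Filter.Tendsto (fun i => a * e i) p (nhds a)

/-- `C` is amenable: for every Banach `C`-bimodule `X`, every bounded derivation
`D : C → X*` into the dual bimodule (actions `(c·φ)(x) = φ(x·c)`, `(φ·c)(x) = φ(c·x)`)
is inner, i.e. of the form `c ↦ c·φ − φ·c`. -/
def IsAmenable.{u} (C : Type*) [NonUnitalNormedRing C] [NormedSpace ℂ C]
    [CompleteSpace C] : Prop :=
  ∀ (X : Type u) [NormedAddCommGroup X] [NormedSpace ℂ X] [CompleteSpace X],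
    ∀ (M : BanachBimodule C X) (D : C →L[ℂ] X →L[ℂ] ℂ),
      (∀ b c : C, D (b * c) = (D c).comp (M.r b) + (D b).comp (M.l c)) →
      ∃ φ : X →L[ℂ] ℂ, ∀ b : C, D b = φ.comp (M.r b) - φ.comp (M.l b)

open Filter Topology in
/-- Uniformly bounded operators: convergence on a dense net gives convergence. -/
theorem aux_exists_lim {ι : Type} {Z Y : Type*} [NormedAddCommGroup Z] [NormedSpace ℂ Z]
    [NormedAddCommGroup Y] [NormedSpace ℂ Y] [CompleteSpace Y] (U : Ultrafilter ι)
    (T : ι → Z →L[ℂ] Y) (K : ℝ) (hT : ∀ i z, ‖T i z‖ ≤ K * ‖z‖) (x : Z) (y : ι → Z)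
    (hy : Tendsto y U (𝓝 x)) (h : ∀ j, ∃ w, Tendsto (fun i => T i (y j)) U (𝓝 w)) :
    ∃ w, Tendsto (fun i => T i x) U (𝓝 w) := by
  have hc : Cauchy (Filter.map (fun i => T i x) (U : Filter ι)) := by
    rw [Metric.cauchy_iff]
    refine ⟨inferInstance, fun ε hε => ?_⟩
    have h0 : Tendsto (fun j => K * ‖x - y j‖) U (𝓝 0) := by
      have : Tendsto (fun j => K * ‖x - y j‖) U (𝓝 (K * ‖x - x‖)) :=
        ((tendsto_const_nhds.sub hy).norm).const_mul K
      simpa using this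
    obtain ⟨j, hj⟩ := (h0.eventually (gt_mem_nhds (show (0:ℝ) < ε / 4 by linarith))).exists
    obtain ⟨w, hw⟩ := h j
    refine ⟨Metric.ball w (ε / 2), ?_, ?_⟩
    · rw [Filter.mem_map]
      filter_upwards [Metric.tendsto_nhds.1 hw (ε / 4) (by linarith)] with i hi
      show dist (T i x) w < ε / 2
      have h1 : dist (T i x) (T i (y j)) < ε / 4 := by
        rw [dist_eq_norm, ← map_sub]
        exact (hT i _).trans_lt hj
      have := dist_triangle (T i x) (T i (y j)) w
      linarith
    · intro a ha b hb
      have := dist_triangle_right a b w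
      rw [Metric.mem_ball] at ha hb
      linarith
  exact CompleteSpace.complete hc

open Filter Topology in
/-- Bounded nets of functionals converge weak-* along an ultrafilter. -/
theorem aux_wlim {ι : Type} {Z : Type*} [NormedAddCommGroup Z] [NormedSpace ℂ Z]
    (U : Ultrafilter ι) (f : ι → Z →L[ℂ] ℂ) (C : ℝ) (hf : ∀ i, ‖f i‖ ≤ C) :
    ∃ φ : Z →L[ℂ] ℂ, ‖φ‖ ≤ C ∧ ∀ x, Tendsto (fun i => f i x) U (𝓝 (φ x)) := by
  have hK := WeakDual.isCompact_closedBall (𝕜 := ℂ) (E := Z) 0 C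
  obtain ⟨φ, hφ, hle⟩ := hK.ultrafilter_le_nhds (U.map (fun i => StrongDual.toWeakDual (f i))) (by
    rw [le_principal_iff]
    refine Filter.mem_map.2 (Filter.univ_mem' fun i => ?_)
    show f i ∈ Metric.closedBall (0 : StrongDual ℂ Z) C
    simpa using hf i)
  refine ⟨WeakDual.toStrongDual φ, by simpa using hφ, fun x => ?_⟩
  have : Tendsto (fun i => StrongDual.toWeakDual (f i)) U (𝓝 φ) := hle
  exact (tendsto_iff_forall_eval_tendsto_topDualPairing.1 this) x

open Filter Topology in
theorem aux_exists_action {ι : Type} (U : Ultrafilter ι) (e : ι → A) (C : ℝ) (hC : 0 ≤ C)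
    (he : ∀ i, ‖e i‖ ≤ C) (G : A →L[ℂ] X →L[ℂ] X) (lam rho : B →L[ℂ] A →L[ℂ] A)
    (h1 : ∀ b a c x, G a (G (lam b c) x) = G (rho b a) (G c x))
    (h2 : ∀ b x j, ∃ y, Tendsto (fun i => G (lam b (e i)) (G (e j) x)) U (𝓝 y))
    (hG : ∀ x, Tendsto (fun i => G (e i) x) U (𝓝 x)) :
    ∃ N : B →L[ℂ] X →L[ℂ] X, ∀ b a x, G a (N b x) = G (rho b a) x := by
  have huniq : ∀ z w, (∀ a, G a z = G a w) → z = w := by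
    intro z w h
    refine tendsto_nhds_unique (hG z) ?_
    simp_rw [h]
    exact hG w
  have hbd : ∀ b i x, ‖G (lam b (e i)) x‖ ≤ (‖G‖ * (‖lam‖ * C) * ‖b‖) * ‖x‖ := by
    intro b i x
    calc ‖G (lam b (e i)) x‖ ≤ ‖G‖ * ‖lam b (e i)‖ * ‖x‖ := G.le_opNorm₂ _ _
      _ ≤ ‖G‖ * (‖lam‖ * ‖b‖ * C) * ‖x‖ := by
        gcongr
        exact (lam.le_opNorm₂ _ _).trans (by gcongr; exact he i)
      _ = _ := by ring
  have hex : ∀ b x, ∃ z, ‖z‖ ≤ (‖G‖ * (‖lam‖ * C)) * ‖b‖ * ‖x‖ ∧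
      ∀ a, G a z = G (rho b a) x := by
    intro b x
    obtain ⟨z, hz⟩ := aux_exists_lim U (fun i => G (lam b (e i))) _ (hbd b) x _ (hG x) (h2 b x)
    refine ⟨z, le_of_tendsto hz.norm (Eventually.of_forall fun i => hbd b i x), fun a => ?_⟩
    have ha := ((G a).continuous.tendsto z).comp hz
    have hb := ((G (rho b a)).continuous.tendsto x).comp (hG x)
    refine tendsto_nhds_unique ha (hb.congr fun i => ?_)
    simp [h1]
  choose N hN1 hN2 using hex
  refine ⟨LinearMap.mkContinuous₂ (LinearMap.mk₂ ℂ N ?_ ?_ ?_ ?_) _ hN1, fun b a x => hN2 b x a⟩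
  · intro b c x
    refine huniq _ _ fun a => ?_
    simp [hN2]
  · intro b c x
    refine huniq _ _ fun a => ?_
    simp [hN2]
  · intro b c x
    refine huniq _ _ fun a => ?_
    simp [hN2]
  · intro b c x
    refine huniq _ _ fun a => ?_
    simp [hN2]

open Filter Topology in
/-- The case of a bimodule on which the approximate identity acts as such. -/
theorem aux_essential {Y : Type u} [NormedAddCommGroup Y] [NormedSpace ℂ Y] [CompleteSpace Y]
    (E : Envelope A B) (hB : IsAmenable.{u} B)
    {ι : Type} (U : Ultrafilter ι) (e : ι → A) (C : ℝ) (hC : 0 ≤ C)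
    (he : ∀ i, ‖e i‖ ≤ C)
    (hl : ∀ a, Tendsto (fun i => e i * a) U (𝓝 a))
    (hr : ∀ a, Tendsto (fun i => a * e i) U (𝓝 a))
    (M : BanachBimodule A Y)
    (hMl : ∀ x, Tendsto (fun i => M.l (e i) x) U (𝓝 x))
    (hMr : ∀ x, Tendsto (fun i => M.r (e i) x) U (𝓝 x))
    (D : A →L[ℂ] Y →L[ℂ] ℂ)
    (hD : ∀ b c : A, D (b * c) = (D c).comp (M.r b) + (D b).comp (M.l c)) :
    ∃ φ : Y →L[ℂ] ℂ, ∀ b : A, D b = φ.comp (M.r b) - φ.comp (M.l b) := by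
  have hD' : ∀ a c x, D (a * c) x = D c (M.r a x) + D a (M.l c x) := by
    intro a c x; rw [hD]; rfl
  -- multiplication identities
  have m1 : ∀ b a c, E.lmul b (a * c) = E.lmul b a * c := fun b a c => E.incl_inj (by
    simp only [E.incl_lmul, E.incl_mul, mul_assoc])
  have m2 : ∀ b a c, E.rmul b (a * c) = a * E.rmul b c := fun b a c => E.incl_inj (by
    simp only [E.incl_rmul, E.incl_mul, mul_assoc])
  have m3 : ∀ b a c, a * E.lmul b c = E.rmul b a * c := fun b a c => E.incl_inj (by
    simp only [E.incl_lmul, E.incl_rmul, E.incl_mul, mul_assoc])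
  have m4 : ∀ b c a, E.lmul (b * c) a = E.lmul b (E.lmul c a) := fun b a c => E.incl_inj (by
    simp only [E.incl_lmul, mul_assoc])
  have m5 : ∀ b c a, E.rmul (b * c) a = E.rmul c (E.rmul b a) := fun b a c => E.incl_inj (by
    simp only [E.incl_rmul, mul_assoc])
  have m6 : ∀ b a, E.lmul (E.incl b) a = b * a := fun b a => E.incl_inj (by
    simp only [E.incl_lmul, E.incl_mul])
  have m7 : ∀ b a, E.rmul (E.incl b) a = a * b := fun b a => E.incl_inj (by
    simp only [E.incl_rmul, E.incl_mul])
  have ul : ∀ z w, (∀ a, M.l a z = M.l a w) → z = w := by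
    intro z w h
    refine tendsto_nhds_unique (hMl z) ?_
    simp_rw [h]
    exact hMl w
  have ur : ∀ z w, (∀ a, M.r a z = M.r a w) → z = w := by
    intro z w h
    refine tendsto_nhds_unique (hMr z) ?_
    simp_rw [h]
    exact hMr w
  obtain ⟨L, hL⟩ := aux_exists_action U e C hC he M.l E.lmul E.rmul
    (by intro b a c x; rw [← M.l_mul, ← M.l_mul, m3])
    (by
      intro b x j
      refine ⟨M.l (E.lmul b (e j)) x, ?_⟩
      simp_rw [← M.l_mul, ← m1]
      exact (((M.l.flip x).comp (E.lmul b)).continuous.tendsto _).comp (hl (e j)))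
    hMl
  obtain ⟨R, hR⟩ := aux_exists_action U e C hC he M.r E.rmul E.lmul
    (by intro b a c x; rw [← M.r_mul, ← M.r_mul, m3])
    (by
      intro b x j
      refine ⟨M.r (E.rmul b (e j)) x, ?_⟩
      simp_rw [← M.r_mul, ← m2]
      exact (((M.r.flip x).comp (E.rmul b)).continuous.tendsto _).comp (hr (e j)))
    hMr
  -- mixed associativity
  have LRa : ∀ a c x, M.l a (R c x) = R c (M.l a x) := by
    intro a c x
    refine ur _ _ fun d => ?_
    rw [hR, M.l_r, hR, ← M.l_r]
  have Ll : ∀ c a x, L c (M.l a x) = M.l (E.lmul c a) x := by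
    intro c a x
    refine ul _ _ fun d => ?_
    rw [hL, ← M.l_mul, ← M.l_mul, m3]
  have Rr : ∀ c a x, R c (M.r a x) = M.r (E.rmul c a) x := by
    intro c a x
    refine ur _ _ fun d => ?_
    rw [hR, ← M.r_mul, ← M.r_mul, m3]
  have Li : ∀ a x, L (E.incl a) x = M.l a x := by
    intro a x
    refine ul _ _ fun d => ?_
    rw [hL, m7, M.l_mul]
  have Ri : ∀ a x, R (E.incl a) x = M.r a x := by
    intro a x
    refine ur _ _ fun d => ?_
    rw [hR, m6, M.r_mul]
  let N : BanachBimodule B Y :=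
    { l := L
      r := R
      l_mul := by
        intro a b x
        refine ul _ _ fun d => ?_
        rw [hL, hL, hL, m5]
      r_mul := by
        intro a b x
        refine ur _ _ fun d => ?_
        rw [hR, hR, hR, m4]
      l_r := by
        intro a b x
        refine ul _ _ fun d => ?_
        rw [LRa, hL, hL, LRa] }
  have uD : ∀ f g : Y →L[ℂ] ℂ, (∀ a x, f (M.l a x) = g (M.l a x)) → f = g := by
    intro f g h
    ext x
    refine tendsto_nhds_unique ((f.continuous.tendsto x).comp (hMl x)) ?_
    refine ((g.continuous.tendsto x).comp (hMl x)).congr fun i => ?_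
    exact (h _ _).symm
  -- extension of the derivation
  have hex : ∀ b, ∃ f : Y →L[ℂ] ℂ, ‖f‖ ≤ (‖D‖ * ‖E.lmul‖ * C + ‖D‖ * C * ‖R‖) * ‖b‖ ∧
      ∀ a y, f (M.l a y) = D (E.lmul b a) y - D a (R b y) := by
    intro b
    obtain ⟨f, hf1, hf2⟩ := aux_wlim U
      (fun i => D (E.lmul b (e i)) - (D (e i)).comp (R b))
      ((‖D‖ * ‖E.lmul‖ * C + ‖D‖ * C * ‖R‖) * ‖b‖) (by
        intro i
        have h1 : ‖D (E.lmul b (e i))‖ ≤ ‖D‖ * (‖E.lmul‖ * ‖b‖ * C) :=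
          (D.le_opNorm _).trans (by
            gcongr
            exact (E.lmul.le_opNorm₂ _ _).trans (by gcongr; exact he i))
        have h2 : ‖(D (e i)).comp (R b)‖ ≤ (‖D‖ * C) * (‖R‖ * ‖b‖) :=
          (ContinuousLinearMap.opNorm_comp_le _ _).trans (by
            gcongr
            · exact (D.le_opNorm _).trans (by gcongr; exact he i)
            · exact R.le_opNorm _)
        refine (norm_sub_le _ _).trans ?_
        linarith)
    refine ⟨f, hf1, fun a y => ?_⟩
    refine tendsto_nhds_unique (hf2 _) ?_
    have t1 : Tendsto (fun i => D (E.lmul b (e i * a)) y) U (𝓝 (D (E.lmul b a) y)) :=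
      (((D.flip y).comp (E.lmul b)).continuous.tendsto _).comp (hl a)
    have t2 : Tendsto (fun i => D a (M.r (E.lmul b (e i)) y)) U (𝓝 (D a (R b y))) := by
      refine (((D a).continuous.tendsto _).comp (hMr (R b y))).congr fun i => ?_
      simp [hR]
    have t3 : Tendsto (fun i => D (e i * a) (R b y)) U (𝓝 (D a (R b y))) :=
      ((D.flip (R b y)).continuous.tendsto _).comp (hl a)
    have t4 : Tendsto (fun i => D a (M.r (e i) (R b y))) U (𝓝 (D a (R b y))) :=
      ((D a).continuous.tendsto _).comp (hMr (R b y))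
    have := (t1.sub t2).sub (t3.sub t4)
    rw [sub_self, sub_zero] at this
    refine this.congr fun i => ?_
    rw [m1, hD', hD']
    simp only [ContinuousLinearMap.sub_apply, ContinuousLinearMap.comp_apply]
    rw [← LRa]
    ring
  choose F hF1 hF2 using hex
  let DB : B →L[ℂ] Y →L[ℂ] ℂ := LinearMap.mkContinuous
    { toFun := F
      map_add' := by
        intro b c
        refine uD _ _ fun a y => ?_
        simp [hF2]
        ring
      map_smul' := by
        intro b c
        refine uD _ _ fun a y => ?_
        simp [hF2]
        ring } _ hF1
  have hDB : ∀ b a y, DB b (M.l a y) = D (E.lmul b a) y - D a (R b y) := fun b a y => hF2 b a y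
  obtain ⟨φ, hφ⟩ := hB Y N DB (by
    intro b c
    refine uD _ _ fun a y => ?_
    show DB (b * c) (M.l a y) = DB c (R b (M.l a y)) + DB b (L c (M.l a y))
    rw [Ll, ← LRa, hDB, hDB, hDB, m4, N.r_mul b c y]
    show _ - D a (R c (R b y)) = _
    ring)
  refine ⟨φ, fun a => ?_⟩
  have h1 : DB (E.incl a) = D a := by
    refine uD _ _ fun c y => ?_
    rw [hDB, m6, Ri, hD']
    ring
  rw [← h1, hφ]
  ext x
  show φ (R _ x) - φ (L _ x) = φ (M.r a x) - φ (M.l a x)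
  rw [Li, Ri]

open Filter Topology in
/-- Derivations vanishing on `A·X·A` are inner. -/
theorem aux_trivial {ι : Type} (U : Ultrafilter ι) (e : ι → A) (C : ℝ) (hC : 0 ≤ C)
    (he : ∀ i, ‖e i‖ ≤ C)
    (hl : ∀ a, Tendsto (fun i => e i * a) U (𝓝 a))
    (hr : ∀ a, Tendsto (fun i => a * e i) U (𝓝 a))
    (M : BanachBimodule A X) (D : A →L[ℂ] X →L[ℂ] ℂ)
    (hD : ∀ a c x, D (a * c) x = D c (M.r a x) + D a (M.l c x))
    (h0 : ∀ a b c x, D a (M.l b (M.r c x)) = 0) :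
    ∃ φ : X →L[ℂ] ℂ, ∀ a x, D a x = φ (M.r a x) - φ (M.l a x) := by
  have hDe : ∀ i, ‖D (e i)‖ ≤ ‖D‖ * C := fun i =>
    (D.le_opNorm _).trans (by gcongr; exact he i)
  obtain ⟨α, -, hα⟩ := aux_wlim U (fun i => D (e i)) _ hDe
  have hγ : ∀ i, ∃ γ : X →L[ℂ] ℂ, ‖γ‖ ≤ ‖D‖ * C * (‖M.l‖ * C) ∧
      ∀ x, Tendsto (fun k => D (e i) (M.l (e k) x)) U (𝓝 (γ x)) := by
    intro i
    refine aux_wlim U (fun k => (D (e i)).comp (M.l (e k))) _ fun k => ?_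
    refine (ContinuousLinearMap.opNorm_comp_le _ _).trans ?_
    gcongr
    · exact hDe i
    · exact (M.l.le_opNorm _).trans (by gcongr; exact he k)
  choose g hg1 hg2 using hγ
  obtain ⟨γ, -, hγ⟩ := aux_wlim U g _ hg1
  have γr : ∀ a x, γ (M.r a x) = 0 := by
    intro a x
    refine tendsto_nhds_unique (hγ _) ?_
    have : ∀ i, g i (M.r a x) = 0 := fun i => by
      refine tendsto_nhds_unique (hg2 i _) ?_
      simp_rw [h0]
      exact tendsto_const_nhds
    simp_rw [this]
    exact tendsto_const_nhds
  have γl : ∀ a x, γ (M.l a x) = α (M.l a x) := by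
    intro a x
    refine tendsto_nhds_unique (hγ _) ?_
    have : ∀ i, g i (M.l a x) = D (e i) (M.l a x) := fun i => by
      refine tendsto_nhds_unique (hg2 i _) ?_
      simp_rw [← M.l_mul]
      exact (((D (e i)).comp (M.l.flip x)).continuous.tendsto _).comp (hl a)
    simp_rw [this]
    exact hα _
  have c1 : ∀ a x k, α (M.r (e k * a) x) = D a (M.r (e k) x) := by
    intro a x k
    rw [M.r_mul]
    refine tendsto_nhds_unique (hα _) ?_
    refine (((D.flip (M.r (e k) x)).continuous.tendsto _).comp (hr a)).congr fun i => ?_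
    simp [hD, h0]
  have c2 : ∀ a x, Tendsto (fun k => D a (M.r (e k) x)) U (𝓝 (α (M.r a x))) := by
    intro a x
    simp_rw [← c1]
    exact ((α.comp (M.r.flip x)).continuous.tendsto _).comp (hl a)
  have c3 : ∀ a x, Tendsto (fun k => D a (M.r (e k) x)) U (𝓝 (D a x - α (M.l a x))) := by
    intro a x
    refine ((((D.flip x).continuous.tendsto _).comp (hl a)).sub (hα (M.l a x))).congr fun k => ?_
    simp [hD]
  refine ⟨α - (2 : ℂ) • γ, fun a x => ?_⟩
  have := tendsto_nhds_unique (c2 a x) (c3 a x)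
  simp only [ContinuousLinearMap.sub_apply, ContinuousLinearMap.smul_apply, γr, γl, smul_eq_mul,
    this]
  ring

open Filter Topology in
/-- Fixed points of the limit of a bounded net of operators form a closed subspace. -/
theorem aux_closed {ι : Type} (U : Ultrafilter ι) (T : ι → X →L[ℂ] X) (K : ℝ) (hK : 0 ≤ K)
    (hT : ∀ i z, ‖T i z‖ ≤ K * ‖z‖) :
    IsClosed {x | Tendsto (fun i => T i x) U (𝓝 x)} := by
  rw [← isSeqClosed_iff_isClosed]
  intro y x hy hyx
  rw [Set.mem_setOf_eq, Metric.tendsto_nhds]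
  intro ε hε
  have h0 : Tendsto (fun j => (K + 1) * ‖x - y j‖) atTop (𝓝 0) := by
    have : Tendsto (fun j => (K + 1) * ‖x - y j‖) atTop (𝓝 ((K + 1) * ‖x - x‖)) :=
      ((tendsto_const_nhds.sub hyx).norm).const_mul _
    simpa using this
  obtain ⟨j, hj⟩ := (h0.eventually (gt_mem_nhds (show (0:ℝ) < ε / 2 by linarith))).exists
  filter_upwards [Metric.tendsto_nhds.1 (hy j) (ε / 2) (by linarith)] with i hi
  have h1 : dist (T i x) (T i (y j)) ≤ K * ‖x - y j‖ := by
    rw [dist_eq_norm, ← map_sub]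
    exact hT i _
  have h2 : dist (y j) x = ‖x - y j‖ := by rw [dist_comm, dist_eq_norm]
  have := dist_triangle4 (T i x) (T i (y j)) (y j) x
  linarith

/-- If `B` is amenable and `A` is a closed two-sided ideal of `B` (an isometric envelope)
possessing a bounded approximate identity, then `A` is amenable. -/
theorem statement13 (E : Envelope A B) (hiso : ∀ a : A, ‖E.incl a‖ = ‖a‖)
    (hB : IsAmenable.{u} B) (hBAI : HasBAI A) : IsAmenable.{u} A := by
  obtain ⟨ι, p, e, hp, ⟨C, he⟩, hlim⟩ := hBAI
  intro X _ _ _ M D hD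
  obtain ⟨i0⟩ : Nonempty ι := hp.nonempty
  have hC : 0 ≤ C := (norm_nonneg _).trans (he i0)
  let U : Ultrafilter ι := Ultrafilter.of p
  have hU : (U : Filter ι) ≤ p := Ultrafilter.of_le p
  have hl : ∀ a, Filter.Tendsto (fun i => e i * a) U (nhds a) := fun a => (hlim a).1.mono_left hU
  have hr : ∀ a, Filter.Tendsto (fun i => a * e i) U (nhds a) := fun a => (hlim a).2.mono_left hU
  have hD' : ∀ a c x, D (a * c) x = D c (M.r a x) + D a (M.l c x) := by
    intro a c x; rw [hD]; rfl
  let S : Submodule ℂ X :=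
    { carrier := {x | Filter.Tendsto (fun i => M.l (e i) x) U (nhds x)} ∩
        {x | Filter.Tendsto (fun i => M.r (e i) x) U (nhds x)}
      add_mem' := by
        rintro x y ⟨h1, h2⟩ ⟨h3, h4⟩
        constructor
        · simpa using Filter.Tendsto.add h1 h3
        · simpa using Filter.Tendsto.add h2 h4
      zero_mem' := by
        constructor <;> simp
      smul_mem' := by
        rintro c x ⟨h1, h2⟩
        constructor
        · simpa using Filter.Tendsto.const_smul h1 c
        · simpa using Filter.Tendsto.const_smul h2 c }
  have hbd : ∀ (G : A →L[ℂ] X →L[ℂ] X) i x, ‖G (e i) x‖ ≤ (‖G‖ * C) * ‖x‖ := fun G i x =>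
    (G.le_opNorm₂ _ _).trans (by gcongr; exact he i)
  have hS : IsClosed (S : Set X) :=
    (aux_closed U (fun i => M.l (e i)) (‖M.l‖ * C) (by positivity) (hbd M.l)).inter
      (aux_closed U (fun i => M.r (e i)) (‖M.r‖ * C) (by positivity) (hbd M.r))
  haveI : CompleteSpace S := hS.completeSpace_coe
  have hlS : ∀ a x, x ∈ S → M.l a x ∈ S := by
    rintro a x ⟨h1, h2⟩
    constructor
    · show Filter.Tendsto _ _ _
      simp_rw [← M.l_mul]
      exact ((M.l.flip x).continuous.tendsto _).comp (hl a)
    · show Filter.Tendsto _ _ _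
      simp_rw [M.l_r]
      exact ((M.l a).continuous.tendsto _).comp h2
  have hrS : ∀ a x, x ∈ S → M.r a x ∈ S := by
    rintro a x ⟨h1, h2⟩
    constructor
    · show Filter.Tendsto _ _ _
      simp_rw [← M.l_r]
      exact ((M.r a).continuous.tendsto _).comp h1
    · show Filter.Tendsto _ _ _
      simp_rw [← M.r_mul]
      exact ((M.r.flip x).continuous.tendsto _).comp (hr a)
  have hlrS : ∀ a c x, M.l a (M.r c x) ∈ S := by
    intro a c x
    constructor
    · show Filter.Tendsto _ _ _
      simp_rw [← M.l_mul]
      exact ((M.l.flip (M.r c x)).continuous.tendsto _).comp (hl a)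
    · show Filter.Tendsto _ _ _
      simp_rw [← M.l_r, ← M.r_mul]
      exact ((M.r.flip (M.l a x)).continuous.tendsto _).comp (hr c)
  let N : BanachBimodule A S :=
    { l := LinearMap.mkContinuous₂ (LinearMap.mk₂ ℂ (fun a (x : S) => (⟨M.l a x, hlS a x x.2⟩ : S))
          (by intros; ext; simp) (by intros; ext; simp) (by intros; ext; simp)
          (by intros; ext; simp)) ‖M.l‖ (fun a x => M.l.le_opNorm₂ a x)
      r := LinearMap.mkContinuous₂ (LinearMap.mk₂ ℂ (fun a (x : S) => (⟨M.r a x, hrS a x x.2⟩ : S))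
          (by intros; ext; simp) (by intros; ext; simp) (by intros; ext; simp)
          (by intros; ext; simp)) ‖M.r‖ (fun a x => M.r.le_opNorm₂ a x)
      l_mul := fun a b x => Subtype.ext (M.l_mul a b x)
      r_mul := fun a b x => Subtype.ext (M.r_mul a b x)
      l_r := fun a b x => Subtype.ext (M.l_r a b x) }
  let DS : A →L[ℂ] S →L[ℂ] ℂ :=
    (ContinuousLinearMap.compL ℂ S X ℂ).flip S.subtypeL ∘L D
  obtain ⟨φ0, hφ0⟩ := aux_essential E hB U e C hC he hl hr N
    (fun x => tendsto_subtype_rng.2 x.2.1) (fun x => tendsto_subtype_rng.2 x.2.2) DS (by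
      intro b c
      ext x
      exact hD' b c x)
  obtain ⟨φ, hφ, -⟩ := exists_extension_norm_eq S φ0
  let D1 : A →L[ℂ] X →L[ℂ] ℂ :=
    D - ((ContinuousLinearMap.compL ℂ X X ℂ φ) ∘L M.r - (ContinuousLinearMap.compL ℂ X X ℂ φ) ∘L M.l)
  have hD1 : ∀ a x, D1 a x = D a x - (φ (M.r a x) - φ (M.l a x)) := fun a x => rfl
  obtain ⟨ψ, hψ⟩ := aux_trivial U e C hC he hl hr M D1 (by
      intro a c x
      simp only [hD1, hD', M.r_mul, M.l_mul, M.l_r]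
      ring) (by
      intro a b c x
      have h := DFunLike.congr_fun (hφ0 a) (⟨_, hlrS b c x⟩ : S)
      have h' : D a (M.l b (M.r c x)) = φ0 ⟨M.r a (M.l b (M.r c x)), hrS _ _ (hlrS b c x)⟩
        - φ0 ⟨M.l a (M.l b (M.r c x)), hlS _ _ (hlrS b c x)⟩ := h
      rw [hD1, h', ← hφ, ← hφ, sub_self])
  refine ⟨φ + ψ, fun a => ?_⟩
  ext x
  have := hψ a x
  rw [hD1] at this
  simp only [ContinuousLinearMap.sub_apply, ContinuousLinearMap.comp_apply,
    ContinuousLinearMap.add_apply]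
  linear_combination this
end
end

section
/- Let A be a commutative Banach algebra and let B be a commutative envelope of A which is weakly amenable. If the closed linear span of {ac : a, c ∈ A} equals A, then A is weakly amenable; indeed, every bounded derivation D : A → A* is zero. -/
noncomputable section

variable {A X : Type*} [NonUnitalNormedRing A] [NormedSpace ℂ A]
  [IsScalarTower ℂ A A] [SMulCommClass ℂ A A] [CompleteSpace A]
  [NormedAddCommGroup X] [NormedSpace ℂ X] [CompleteSpace X]

variable {B : Type*} [NonUnitalNormedRing B] [NormedSpace ℂ B]
  [IsScalarTower ℂ B B] [SMulCommClass ℂ B B] [CompleteSpace B]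

/-- If `A` is a commutative Banach algebra, `B` is a commutative weakly amenable envelope of
`A`, and the closed linear span of `{ac : a, c ∈ A}` is all of `A`, then every bounded
derivation `D : A → A*` is zero (so `A` is weakly amenable). Here the dual actions are
`(a·φ)(x) = φ(xa)` and `(φ·a)(x) = φ(ax)`. -/
theorem statement14
    (hAcomm : ∀ a c : A, a * c = c * a) (hBcomm : ∀ x y : B, x * y = y * x)
    (E : Envelope A B)
    (hBwa : ∀ D : B →L[ℂ] B →L[ℂ] ℂ,
      (∀ x y : B, D (x * y) = (D y).comp ((ContinuousLinearMap.mul ℂ B).flip x) +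
        (D x).comp (ContinuousLinearMap.mul ℂ B y)) →
      ∃ φ : B →L[ℂ] ℂ, ∀ x : B,
        D x = φ.comp ((ContinuousLinearMap.mul ℂ B).flip x) -
          φ.comp (ContinuousLinearMap.mul ℂ B x))
    (hspan : (Submodule.span ℂ {x : A | ∃ a c : A, a * c = x}).topologicalClosure = ⊤) :
    ∀ D : A →L[ℂ] A →L[ℂ] ℂ,
      (∀ a c : A, D (a * c) = (D c).comp ((ContinuousLinearMap.mul ℂ A).flip a) +
        (D a).comp (ContinuousLinearMap.mul ℂ A c)) →
      D = 0 := by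
  intro D hD
  have hDa : ∀ a c x : A, D (a * c) x = D c (x * a) + D a (c * x) := by
    intro a c x
    rw [hD]; simp
  -- functionals vanishing on products vanish
  have key : ∀ f : A →L[ℂ] ℂ, (∀ a c : A, f (a * c) = 0) → ∀ x, f x = 0 := by
    intro f hf x
    have h1 : Submodule.span ℂ {x : A | ∃ a c : A, a * c = x} ≤ f.ker := by
      rw [Submodule.span_le]
      rintro _ ⟨a, c, rfl⟩
      exact hf a c
    have h2 := Submodule.topologicalClosure_minimal _ h1 f.isClosed_ker
    rw [hspan] at h2
    exact h2 (Submodule.mem_top (x := x))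
  have l_mul : ∀ (b : B) (a c : A), E.lmul b (a * c) = E.lmul b a * c := by
    intro b a c
    apply E.incl_inj
    rw [E.incl_lmul, E.incl_mul, E.incl_mul, E.incl_lmul, mul_assoc]
  have l_mul2 : ∀ (b : B) (a c : A), E.lmul b (a * c) = a * E.lmul b c := by
    intro b a c
    rw [hAcomm, l_mul, hAcomm]
  have m1 : ∀ (b : B) (a c : A), E.lmul b a * c = a * E.lmul b c := fun b a c =>
    (l_mul b a c).symm.trans (l_mul2 b a c)
  have l_l : ∀ (b y : B) (a : A), E.lmul (b * y) a = E.lmul b (E.lmul y a) := by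
    intro b y a
    apply E.incl_inj
    rw [E.incl_lmul, E.incl_lmul, E.incl_lmul, mul_assoc]
  have l_incl : ∀ (x a : A), E.lmul (E.incl x) a = x * a := by
    intro x a
    apply E.incl_inj
    rw [E.incl_lmul, E.incl_mul]
  have main : ∀ (a₁ a₂ c : A) (b y : B),
      D (E.lmul b (a₁ * a₂)) (E.lmul y c) = D (a₁ * a₂) (E.lmul (b * y) c) := by
    intro a₁ a₂ c
    let P : (A →L[ℂ] ℂ) →L[ℂ] (B →L[ℂ] ℂ) :=
      (ContinuousLinearMap.compL ℂ B A ℂ).flip (E.lmul.flip c)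
    let Δ : B →L[ℂ] B →L[ℂ] ℂ :=
      P.comp (D.comp (E.lmul.flip (a₁ * a₂))) -
        (ContinuousLinearMap.compL ℂ B B ℂ (P (D (a₁ * a₂)))).comp (ContinuousLinearMap.mul ℂ B)
    have hΔ : ∀ b y, Δ b y =
        D (E.lmul b (a₁ * a₂)) (E.lmul y c) - D (a₁ * a₂) (E.lmul (b * y) c) := by
      intro b y
      simp [Δ, P]
    obtain ⟨φ, hφ⟩ := hBwa Δ (by
      intro b₁ b₂
      ext y
      simp only [add_apply, ContinuousLinearMap.comp_apply,
        ContinuousLinearMap.flip_apply, ContinuousLinearMap.mul_apply', hΔ]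
      rw [hBcomm y b₁, ← mul_assoc b₂ b₁ y, ← mul_assoc b₁ b₂ y, hBcomm b₂ b₁]
      have e1 : E.lmul (b₁ * b₂) (a₁ * a₂) = E.lmul b₁ a₁ * E.lmul b₂ a₂ := by
        rw [l_l, l_mul2, l_mul]
      have e2 : E.lmul b₂ (a₁ * a₂) = a₁ * E.lmul b₂ a₂ := l_mul2 _ _ _
      have e3 : E.lmul b₁ (a₁ * a₂) = E.lmul b₁ a₁ * a₂ := l_mul _ _ _
      have f1 : E.lmul y c * E.lmul b₁ a₁ = E.lmul (b₁ * y) c * a₁ := by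
        rw [l_l b₁ y, m1 b₁ _ a₁]
      have f2 : E.lmul b₂ a₂ * E.lmul y c = a₂ * E.lmul (b₂ * y) c := by
        rw [l_l b₂ y, m1]
      have f3 : E.lmul b₂ a₂ * E.lmul (b₁ * y) c = a₂ * E.lmul (b₁ * b₂ * y) c := by
        rw [hBcomm b₁ b₂, mul_assoc, l_l b₂, m1 b₂ a₂]
      have f4 : E.lmul (b₂ * y) c * E.lmul b₁ a₁ = E.lmul (b₁ * b₂ * y) c * a₁ := by
        rw [mul_assoc, l_l b₁ (b₂ * y), m1 b₁ _ a₁]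
      rw [e1, e2, e3, hDa, hDa, hDa, hDa, f1, f2, f3, f4]
      ring)
    intro b y
    have h := congrArg (fun f => f y) (hφ b)
    simp only [sub_apply, ContinuousLinearMap.comp_apply,
        ContinuousLinearMap.flip_apply, ContinuousLinearMap.mul_apply', hΔ, hBcomm y b,
        sub_self] at h
    exact sub_eq_zero.mp h
  have h4 : ∀ b a₁ a₂ y c : A, D b ((a₁ * a₂) * (y * c)) = 0 := by
    intro b a₁ a₂ y c
    have h := main a₁ a₂ c (E.incl b) (E.incl y)
    rw [← E.incl_mul, l_incl, l_incl, l_incl, hDa b, hAcomm (y * c) b, ← mul_assoc b y c] at h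
    simpa using h
  have h3 : ∀ b a₁ a₂ z : A, D b ((a₁ * a₂) * z) = 0 := fun b a₁ a₂ =>
    key ((D b).comp (ContinuousLinearMap.mul ℂ A (a₁ * a₂))) (fun y c => h4 b a₁ a₂ y c)
  have h2 : ∀ b z w : A, D b (w * z) = 0 := fun b z =>
    key ((D b).comp ((ContinuousLinearMap.mul ℂ A).flip z)) (fun y c => h3 b y c z)
  ext b x
  exact key (D b) (fun w z => h2 b z w) x
end
end

section
/- Let A be a Banach algebra with a bounded approximate identity and suppose A has an envelope B which is approximately amenable. Then A is approximately amenable: for every Banach A-bimodule X and every bounded derivation D : A → X*, there is a net (φ_γ) in X* such that D(a) = lim_γ (a·φ_γ − φ_γ·a) in norm for every a ∈ A. -/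
noncomputable section

variable {A X : Type*} [NonUnitalNormedRing A] [NormedSpace ℂ A]
  [IsScalarTower ℂ A A] [SMulCommClass ℂ A A] [CompleteSpace A]
  [NormedAddCommGroup X] [NormedSpace ℂ X] [CompleteSpace X]

variable {B : Type*} [NonUnitalNormedRing B] [NormedSpace ℂ B]
  [IsScalarTower ℂ B B] [SMulCommClass ℂ B B] [CompleteSpace B]

/-- `C` is approximately amenable: for every Banach `C`-bimodule `X`, every bounded
derivation `D : C → X*` is approximately inner: there is a net `(φ_γ)` in `X*` with
`D(c) = lim_γ (c·φ_γ − φ_γ·c)` in norm for every `c`. -/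
def IsApproxAmenable.{u} (C : Type*) [NonUnitalNormedRing C] [NormedSpace ℂ C]
    [CompleteSpace C] : Prop :=
  ∀ (X : Type u) [NormedAddCommGroup X] [NormedSpace ℂ X] [CompleteSpace X],
    ∀ (M : BanachBimodule C X) (D : C →L[ℂ] X →L[ℂ] ℂ),
      (∀ b c : C, D (b * c) = (D c).comp (M.r b) + (D b).comp (M.l c)) →
      ∃ (ι : Type u) (p : Filter ι), p.NeBot ∧ ∃ φ : ι → (X →L[ℂ] ℂ),
        ∀ b : C, Filter.Tendsto (fun γ => (φ γ).comp (M.r b) - (φ γ).comp (M.l b)) p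
          (nhds (D b))

open Filter Topology in
/-- Pointwise limits of a uniformly bounded family of operators. -/
theorem aux_lim1 {ι F G : Type*} [NormedAddCommGroup F] [NormedSpace ℂ F]
    [NormedAddCommGroup G] [NormedSpace ℂ G] (p : Filter ι) [p.NeBot]
    (T : ι → F →L[ℂ] G) (K : ℝ) (hK : ∀ i, ‖T i‖ ≤ K)
    (h : ∀ x, ∃ y, Tendsto (fun i => T i x) p (𝓝 y)) :
    ∃ S : F →L[ℂ] G, ‖S‖ ≤ K ∧ ∀ x, Tendsto (fun i => T i x) p (𝓝 (S x)) := by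
  choose S hS using h
  have hne : Nonempty ι := p.nonempty_of_neBot
  have hK0 : 0 ≤ K := (norm_nonneg _).trans (hK (Classical.choice hne))
  let L : F →ₗ[ℂ] G :=
    { toFun := S
      map_add' := fun x y => tendsto_nhds_unique (hS (x + y)) (by
        simpa using (hS x).add (hS y))
      map_smul' := fun c x => tendsto_nhds_unique (hS (c • x)) (by
        simpa using (hS x).const_smul c) }
  refine ⟨L.mkContinuous K fun x => ?_, LinearMap.mkContinuous_norm_le _ hK0 _, hS⟩
  exact le_of_tendsto (hS x).norm (Eventually.of_forall fun i => (T i).le_of_opNorm_le (hK i) x)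

open Filter Topology in
theorem aux_lim2 {ι E F G : Type*} [NormedAddCommGroup E] [NormedSpace ℂ E]
    [NormedAddCommGroup F] [NormedSpace ℂ F]
    [NormedAddCommGroup G] [NormedSpace ℂ G] (p : Filter ι) [p.NeBot]
    (T : ι → E →L[ℂ] F →L[ℂ] G) (K : ℝ) (hK : ∀ i, ‖T i‖ ≤ K)
    (h : ∀ e x, ∃ y, Tendsto (fun i => T i e x) p (𝓝 y)) :
    ∃ S : E →L[ℂ] F →L[ℂ] G, ∀ e x, Tendsto (fun i => T i e x) p (𝓝 (S e x)) := by
  have h1 : ∀ e, ∃ S : F →L[ℂ] G, ‖S‖ ≤ K * ‖e‖ ∧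
      ∀ x, Tendsto (fun i => T i e x) p (𝓝 (S x)) := fun e =>
    aux_lim1 p (fun i => T i e) (K * ‖e‖) (fun i => (T i).le_of_opNorm_le (hK i) e) (h e)
  choose S hSn hS using h1
  let L : E →ₗ[ℂ] F →L[ℂ] G :=
    { toFun := S
      map_add' := fun e f => by
        ext x
        exact tendsto_nhds_unique (hS (e + f) x) (by simpa using (hS e x).add (hS f x))
      map_smul' := fun c e => by
        ext x
        exact tendsto_nhds_unique (hS (c • e) x) (by simpa using (hS e x).const_smul c) }
  exact ⟨L.mkContinuous K hSn, hS⟩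

open Filter Topology in
/-- Bounded scalar families converge along ultrafilters. -/
theorem aux_ultra {ι : Type*} (U : Ultrafilter ι) (f : ι → ℂ) (K : ℝ) (hf : ∀ i, ‖f i‖ ≤ K) :
    ∃ z, Tendsto f U (𝓝 z) := by
  have hc : IsCompact (Metric.closedBall (0 : ℂ) K) := isCompact_closedBall _ _
  obtain ⟨z, -, hz⟩ := hc.ultrafilter_le_nhds (U.map f) (by
    rw [le_principal_iff]
    exact Eventually.of_forall (f := (U : Filter ι)) fun i => by simpa using hf i)
  exact ⟨z, hz⟩

open Filter Topology in
theorem aux_ultra2 {ι E F : Type*} [NormedAddCommGroup E] [NormedSpace ℂ E]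
    [NormedAddCommGroup F] [NormedSpace ℂ F] (U : Ultrafilter ι)
    (T : ι → E →L[ℂ] F →L[ℂ] ℂ) (K : ℝ) (hK : ∀ i, ‖T i‖ ≤ K) :
    ∃ S : E →L[ℂ] F →L[ℂ] ℂ, ∀ e x, Tendsto (fun i => T i e x) U (𝓝 (S e x)) := by
  refine aux_lim2 (U : Filter ι) T K hK fun e x => aux_ultra U _ (K * ‖e‖ * ‖x‖) fun i => ?_
  exact ((T i e).le_opNorm x).trans
    (mul_le_mul_of_nonneg_right ((T i).le_of_opNorm_le (hK i) e) (norm_nonneg _))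

open Filter Topology in
/-- A uniformly bounded family converging at points arbitrarily close to `x` converges at `x`. -/
theorem aux_conv {ι F G : Type*} [NormedAddCommGroup F] [NormedSpace ℂ F]
    [NormedAddCommGroup G] [NormedSpace ℂ G] [CompleteSpace G] (p : Filter ι) [p.NeBot]
    (T : ι → F →L[ℂ] G) (K : ℝ) (hK : ∀ i, ‖T i‖ ≤ K) (x : F)
    (h : ∀ ε > 0, ∃ y z, ‖x - y‖ < ε ∧ Tendsto (fun i => T i y) p (𝓝 z)) :
    ∃ z, Tendsto (fun i => T i x) p (𝓝 z) := by
  have hne : Nonempty ι := p.nonempty_of_neBot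
  have hK0 : 0 ≤ K := (norm_nonneg _).trans (hK (Classical.choice hne))
  refine CompleteSpace.complete (f := p.map fun i => T i x) ?_
  rw [Metric.cauchy_iff]
  refine ⟨inferInstance, fun ε hε => ?_⟩
  obtain ⟨y, z, hy, hz⟩ := h (ε / (4 * (K + 1))) (by positivity)
  have hz' := (Metric.tendsto_nhds.1 hz) (ε / 4) (by positivity)
  have key : ∀ i, dist (T i y) z < ε / 4 → dist (T i x) z < ε / 2 := by
    intro i hi
    have h1 : ‖T i (x - y)‖ ≤ K * ‖x - y‖ := (T i).le_of_opNorm_le (hK i) _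
    have h2 : K * ‖x - y‖ ≤ (K + 1) * (ε / (4 * (K + 1))) := by
      apply mul_le_mul (by linarith) hy.le (norm_nonneg _) (by linarith)
    have h3 : (K + 1) * (ε / (4 * (K + 1))) = ε / 4 := by
      field_simp
    have h4 : dist (T i x) (T i y) = ‖T i (x - y)‖ := by rw [dist_eq_norm, map_sub]
    have := dist_triangle (T i x) (T i y) z
    linarith
  refine ⟨Metric.ball z (ε / 2), ?_, fun u hu v hv => ?_⟩
  · rw [mem_map]
    filter_upwards [hz'] with i hi
    exact key i hi
  · have := dist_triangle_right u v z
    rw [Metric.mem_ball] at hu hv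
    linarith

/-- Derivation property into the dual. -/
def IsDer {A X : Type*} [NonUnitalNormedRing A] [NormedSpace ℂ A]
    [NormedAddCommGroup X] [NormedSpace ℂ X] (M : BanachBimodule A X)
    (D : A →L[ℂ] X →L[ℂ] ℂ) : Prop :=
  ∀ b c x, D (b * c) x = D c (M.r b x) + D b (M.l c x)

/-- inner derivation -/
def adj {A X : Type*} [NonUnitalNormedRing A] [NormedSpace ℂ A]
    [NormedAddCommGroup X] [NormedSpace ℂ X] (M : BanachBimodule A X)
    (φ : X →L[ℂ] ℂ) : A →L[ℂ] X →L[ℂ] ℂ :=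
  (ContinuousLinearMap.compL ℂ X X ℂ φ).comp M.r - (ContinuousLinearMap.compL ℂ X X ℂ φ).comp M.l

theorem adj_apply {A X : Type*} [NonUnitalNormedRing A] [NormedSpace ℂ A]
    [NormedAddCommGroup X] [NormedSpace ℂ X] (M : BanachBimodule A X)
    (φ : X →L[ℂ] ℂ) (a : A) (x : X) : adj M φ a x = φ (M.r a x) - φ (M.l a x) := by
  simp [adj]

theorem IsDer.sub_adj {A X : Type*} [NonUnitalNormedRing A] [NormedSpace ℂ A]
    [NormedAddCommGroup X] [NormedSpace ℂ X] {M : BanachBimodule A X}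
    {D : A →L[ℂ] X →L[ℂ] ℂ} (hD : IsDer M D) (φ : X →L[ℂ] ℂ) : IsDer M (D - adj M φ) := by
  intro b c x
  simp only [ContinuousLinearMap.sub_apply, adj_apply, hD b c x, M.l_mul, M.r_mul, M.l_r]
  ring

section bai
open Filter Topology

variable {A X : Type*} [NonUnitalNormedRing A] [NormedSpace ℂ A]
  [NormedAddCommGroup X] [NormedSpace ℂ X] {ι : Type*} (U : Ultrafilter ι) (e : ι → A)
  (C : ℝ)

theorem compL_bound (φ : X →L[ℂ] ℂ) : ‖ContinuousLinearMap.compL ℂ X X ℂ φ‖ ≤ ‖φ‖ :=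
  ContinuousLinearMap.opNorm_le_bound _ (norm_nonneg φ) fun g =>
    ContinuousLinearMap.opNorm_comp_le φ g

theorem compL_flip_bound (g : X →L[ℂ] X) :
    ‖(ContinuousLinearMap.compL ℂ X X ℂ).flip g‖ ≤ ‖g‖ :=
  ContinuousLinearMap.opNorm_le_bound _ (norm_nonneg g) fun φ => by
    rw [mul_comm]
    exact ContinuousLinearMap.opNorm_comp_le φ g

theorem aux_LR (hC : ∀ i, ‖e i‖ ≤ C) (m : A →L[ℂ] X →L[ℂ] X) :
    ∃ R : (X →L[ℂ] ℂ) →L[ℂ] X →L[ℂ] ℂ, ∀ φ x, Tendsto (fun i => φ (m (e i) x)) U (𝓝 (R φ x)) := by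
  obtain ⟨S, hS⟩ := aux_ultra2 U (fun i => (ContinuousLinearMap.compL ℂ X X ℂ).flip (m (e i)))
    (‖m‖ * C) (fun i => by
      exact (compL_flip_bound _).trans (m.le_opNorm_of_le (hC i)))
  exact ⟨S, fun φ x => by simpa using hS φ x⟩

theorem aux_func (hC : ∀ i, ‖e i‖ ≤ C) (m : A →L[ℂ] X →L[ℂ] ℂ) :
    ∃ η : X →L[ℂ] ℂ, ∀ x, Tendsto (fun i => m (e i) x) U (𝓝 (η x)) := by
  have hb : ∀ i, ‖m (e i)‖ ≤ ‖m‖ * C := fun i => m.le_opNorm_of_le (hC i)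
  obtain ⟨S, -, hS⟩ := aux_lim1 (U : Filter ι) (fun i => m (e i)) (‖m‖ * C) hb
    (fun x => aux_ultra U _ (‖m‖ * C * ‖x‖) fun i => (m (e i)).le_of_opNorm_le (hb i) x)
  exact ⟨S, hS⟩

theorem aux_left
    (hl : ∀ a, Tendsto (fun i => e i * a) U (𝓝 a))
    (hr : ∀ a, Tendsto (fun i => a * e i) U (𝓝 a))
    (hC : ∀ i, ‖e i‖ ≤ C) (M : BanachBimodule A X) (D : A →L[ℂ] X →L[ℂ] ℂ)
    (hD : IsDer M D) (L R : (X →L[ℂ] ℂ) →L[ℂ] X →L[ℂ] ℂ)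
    (hL : ∀ φ x, Tendsto (fun i => φ (M.l (e i) x)) U (𝓝 (L φ x)))
    (hR : ∀ φ x, Tendsto (fun i => φ (M.r (e i) x)) U (𝓝 (R φ x))) :
    ∃ η : X →L[ℂ] ℂ, ∀ a x, (D - adj M η) a x = L (D a) x := by
  obtain ⟨η, hη⟩ := aux_func U e C hC (R.comp D)
  refine ⟨η, fun a x => ?_⟩
  have h1 : η (M.r a x) = D a x - L (D a) x := by
    refine tendsto_nhds_unique (hη (M.r a x)) ?_
    have h2 : ∀ i, (R.comp D) (e i) (M.r a x) = D (a * e i) x - D a (M.l (e i) x) := by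
      intro i
      rw [hD a (e i) x, add_sub_cancel_right]
      refine tendsto_nhds_unique (hR (D (e i)) (M.r a x)) ?_
      simp only [← M.r_mul]
      exact (((D (e i)).cont.comp (ContinuousLinearMap.apply ℂ X x).cont).comp M.r.cont).tendsto a
        |>.comp (hr a)
    simp only [h2]
    refine Tendsto.sub ?_ (hL _ _)
    exact ((ContinuousLinearMap.apply ℂ ℂ x).cont.comp D.cont).tendsto a |>.comp (hr a)
  have h3 : η (M.l a x) = 0 := by
    refine tendsto_nhds_unique (hη (M.l a x)) ?_
    have h2 : ∀ i, (R.comp D) (e i) (M.l a x) = R (D (e i * a)) x - D a (M.r (e i) x) := by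
      intro i
      refine tendsto_nhds_unique (hR (D (e i)) (M.l a x)) ?_
      have h4 : ∀ j, D (e i) (M.r (e j) (M.l a x))
          = D (e i * a) (M.r (e j) x) - D a (M.r (e j * e i) x) := by
        intro j
        rw [hD (e i) a, M.r_mul, M.l_r]
        ring
      simp only [h4]
      refine Tendsto.sub (hR _ _) ?_
      exact (((D a).cont.comp (ContinuousLinearMap.apply ℂ X x).cont).comp M.r.cont).tendsto (e i)
        |>.comp (hl (e i))
    simp only [h2]
    rw [← sub_self (R (D a) x)]
    refine Tendsto.sub ?_ (hR _ _)
    exact (((ContinuousLinearMap.apply ℂ ℂ x).cont.comp R.cont).comp D.cont).tendsto a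
      |>.comp (hl a)
  simp only [ContinuousLinearMap.sub_apply, adj_apply, h1, h3]
  ring

theorem aux_right
    (hl : ∀ a, Tendsto (fun i => e i * a) U (𝓝 a))
    (hr : ∀ a, Tendsto (fun i => a * e i) U (𝓝 a))
    (hC : ∀ i, ‖e i‖ ≤ C) (M : BanachBimodule A X) (D : A →L[ℂ] X →L[ℂ] ℂ)
    (hD : IsDer M D) (L R : (X →L[ℂ] ℂ) →L[ℂ] X →L[ℂ] ℂ)
    (hL : ∀ φ x, Tendsto (fun i => φ (M.l (e i) x)) U (𝓝 (L φ x)))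
    (hR : ∀ φ x, Tendsto (fun i => φ (M.r (e i) x)) U (𝓝 (R φ x))) :
    ∃ η : X →L[ℂ] ℂ, ∀ a x, (D - adj M η) a x = R (D a) x := by
  obtain ⟨η, hη⟩ := aux_func U e C hC (L.comp D)
  refine ⟨-η, fun a x => ?_⟩
  have h1 : η (M.l a x) = D a x - R (D a) x := by
    refine tendsto_nhds_unique (hη (M.l a x)) ?_
    have h2 : ∀ i, (L.comp D) (e i) (M.l a x) = D (e i * a) x - D a (M.r (e i) x) := by
      intro i
      rw [hD (e i) a x, add_sub_cancel_left]
      refine tendsto_nhds_unique (hL (D (e i)) (M.l a x)) ?_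
      simp only [← M.l_mul]
      exact (((D (e i)).cont.comp (ContinuousLinearMap.apply ℂ X x).cont).comp M.l.cont).tendsto a
        |>.comp (hl a)
    simp only [h2]
    refine Tendsto.sub ?_ (hR _ _)
    exact ((ContinuousLinearMap.apply ℂ ℂ x).cont.comp D.cont).tendsto a |>.comp (hl a)
  have h3 : η (M.r a x) = 0 := by
    refine tendsto_nhds_unique (hη (M.r a x)) ?_
    have h2 : ∀ i, (L.comp D) (e i) (M.r a x) = L (D (a * e i)) x - D a (M.l (e i) x) := by
      intro i
      refine tendsto_nhds_unique (hL (D (e i)) (M.r a x)) ?_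
      have h4 : ∀ j, D (e i) (M.l (e j) (M.r a x))
          = D (a * e i) (M.l (e j) x) - D a (M.l (e i * e j) x) := by
        intro j
        rw [hD a (e i), M.l_mul, M.l_r]
        ring
      simp only [h4]
      refine Tendsto.sub (hL _ _) ?_
      exact (((D a).cont.comp (ContinuousLinearMap.apply ℂ X x).cont).comp M.l.cont).tendsto (e i)
        |>.comp (hr (e i))
    simp only [h2]
    rw [← sub_self (L (D a) x)]
    refine Tendsto.sub ?_ (hL _ _)
    exact (((ContinuousLinearMap.apply ℂ ℂ x).cont.comp L.cont).comp D.cont).tendsto a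
      |>.comp (hr a)
  simp only [ContinuousLinearMap.sub_apply, adj_apply, ContinuousLinearMap.neg_apply, h1, h3]
  ring

/-- Reduction to the essential part. -/
theorem aux_reduce
    (hl : ∀ a, Tendsto (fun i => e i * a) U (𝓝 a))
    (hr : ∀ a, Tendsto (fun i => a * e i) U (𝓝 a))
    (hC : ∀ i, ‖e i‖ ≤ C) (M : BanachBimodule A X) :
    ∃ K : ℝ, 0 ≤ K ∧ ∀ D : A →L[ℂ] X →L[ℂ] ℂ, IsDer M D → ∃ η : X →L[ℂ] ℂ, ∀ a, ∀ δ : ℝ, 0 ≤ δ →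
      (∀ i j x, ‖D a (M.l (e i) (M.r (e j) x))‖ ≤ δ * ‖M.l (e i) (M.r (e j) x)‖) →
      ‖(D - adj M η) a‖ ≤ δ * K := by
  obtain ⟨L, hL⟩ := aux_LR U e C hC M.l
  obtain ⟨R, hR⟩ := aux_LR U e C hC M.r
  have hne : Nonempty ι := (U : Filter ι).nonempty_of_neBot
  have hC0 : 0 ≤ C := (norm_nonneg _).trans (hC hne.some)
  refine ⟨(‖M.l‖ * C) * (‖M.r‖ * C), by positivity, fun D hD => ?_⟩
  obtain ⟨η₁, h₁⟩ := aux_left U e C hl hr hC M D hD L R hL hR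
  obtain ⟨η₂, h₂⟩ := aux_right U e C hl hr hC M _ (hD.sub_adj η₁) L R hL hR
  refine ⟨η₁ + η₂, fun a δ hδ h => ?_⟩
  refine ContinuousLinearMap.opNorm_le_bound _ (by positivity) fun x => ?_
  have e1 : (D - adj M (η₁ + η₂)) a x = R ((D - adj M η₁) a) x := by
    rw [← h₂]
    simp only [ContinuousLinearMap.sub_apply, adj_apply, ContinuousLinearMap.add_apply]
    ring
  rw [e1]
  refine le_of_tendsto (hR _ x).norm (Eventually.of_forall fun j => ?_)
  rw [h₁]
  refine le_of_tendsto (hL _ _).norm (Eventually.of_forall fun i => ?_)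
  refine (h i j x).trans ?_
  have b1 : ‖M.l (e i) (M.r (e j) x)‖ ≤ (‖M.l‖ * C) * ‖M.r (e j) x‖ :=
    (M.l (e i)).le_of_opNorm_le (M.l.le_opNorm_of_le (hC i)) _
  have b2 : ‖M.r (e j) x‖ ≤ (‖M.r‖ * C) * ‖x‖ :=
    (M.r (e j)).le_of_opNorm_le (M.r.le_opNorm_of_le (hC j)) _
  calc δ * ‖M.l (e i) (M.r (e j) x)‖ ≤ δ * ((‖M.l‖ * C) * ((‖M.r‖ * C) * ‖x‖)) := by
        gcongr
        exact b1.trans (by gcongr)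
    _ = _ := by ring

theorem aux_dens {Y : Type*} [NormedAddCommGroup Y] (m : A →L[ℂ] X →L[ℂ] X)
    (hm : ∀ x, Tendsto (fun i => m (e i) x) U (𝓝 x)) (F G : X → Y) (hF : Continuous F)
    (hG : Continuous G) (h : ∀ a x, F (m a x) = G (m a x)) (x : X) : F x = G x := by
  refine tendsto_nhds_unique ((hF.tendsto x).comp (hm x)) ?_
  have : (F ∘ fun i => m (e i) x) = (G ∘ fun i => m (e i) x) := funext fun i => h _ _
  rw [this]
  exact (hG.tendsto x).comp (hm x)

theorem Envelope.lmul_mul {B : Type*} [NonUnitalNormedRing B] [NormedSpace ℂ B]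
    (E : Envelope A B) (b : B) (a c : A) : E.lmul b (a * c) = E.lmul b a * c :=
  E.incl_inj (by simp only [E.incl_mul, E.incl_lmul, mul_assoc])

theorem Envelope.rmul_mul {B : Type*} [NonUnitalNormedRing B] [NormedSpace ℂ B]
    (E : Envelope A B) (b : B) (a c : A) : E.rmul b (a * c) = a * E.rmul b c :=
  E.incl_inj (by simp only [E.incl_mul, E.incl_rmul, mul_assoc])

theorem Envelope.mid {B : Type*} [NonUnitalNormedRing B] [NormedSpace ℂ B]
    (E : Envelope A B) (b : B) (a c : A) : E.rmul b a * c = a * E.lmul b c :=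
  E.incl_inj (by simp only [E.incl_mul, E.incl_rmul, E.incl_lmul, mul_assoc])

/-- The essential case. -/
theorem aux_ess {B : Type*} [NonUnitalNormedRing B] [NormedSpace ℂ B] [CompleteSpace B]
    [CompleteSpace X]
    (hl : ∀ a, Tendsto (fun i => e i * a) U (𝓝 a))
    (hr : ∀ a, Tendsto (fun i => a * e i) U (𝓝 a))
    (hC : ∀ i, ‖e i‖ ≤ C) (E : Envelope A B) (M : BanachBimodule A X)
    (hMl : ∀ x, Tendsto (fun i => M.l (e i) x) U (𝓝 x))
    (hMr : ∀ x, Tendsto (fun i => M.r (e i) x) U (𝓝 x))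
    (D : A →L[ℂ] X →L[ℂ] ℂ) (hD : IsDer M D) :
    ∃ (N : BanachBimodule B X) (D' : B →L[ℂ] X →L[ℂ] ℂ), IsDer N D' ∧
      (∀ a, N.l (E.incl a) = M.l a) ∧ (∀ a, N.r (E.incl a) = M.r a) ∧
      (∀ a, D' (E.incl a) = D a) := by
  have cl : ∀ x, Continuous fun a => M.l a x := fun x =>
    (ContinuousLinearMap.apply ℂ X x).cont.comp M.l.cont
  have cr : ∀ x, Continuous fun a => M.r a x := fun x =>
    (ContinuousLinearMap.apply ℂ X x).cont.comp M.r.cont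
  have cD : ∀ x, Continuous fun a => D a x := fun x =>
    (ContinuousLinearMap.apply ℂ ℂ x).cont.comp D.cont
  -- the left action
  have limL : ∀ b a x, Tendsto (fun i => M.l (E.lmul b (e i)) (M.l a x)) U
      (𝓝 (M.l (E.lmul b a) x)) := by
    intro b a x
    simp only [← M.l_mul, ← E.lmul_mul]
    exact ((cl x).comp (E.lmul b).cont).tendsto a |>.comp (hl a)
  have limR : ∀ b a x, Tendsto (fun i => M.r (E.rmul b (e i)) (M.r a x)) U
      (𝓝 (M.r (E.rmul b a) x)) := by
    intro b a x
    simp only [← M.r_mul, ← E.rmul_mul]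
    exact ((cr x).comp (E.rmul b).cont).tendsto a |>.comp (hr a)
  have near : ∀ (m : A →L[ℂ] X →L[ℂ] X), (∀ x, Tendsto (fun i => m (e i) x) U (𝓝 x)) →
      ∀ x, ∀ ε > 0, ∃ a, ‖x - m a x‖ < ε := by
    intro m hm x ε hε
    obtain ⟨i, hi⟩ := (Metric.tendsto_nhds.1 (hm x) ε hε).exists
    exact ⟨e i, by rwa [← dist_eq_norm, dist_comm]⟩
  have bnd : ∀ (m : A →L[ℂ] X →L[ℂ] X) (q : B →L[ℂ] A →L[ℂ] A) (i : ι),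
      ‖m.comp (q.flip (e i))‖ ≤ ‖m‖ * (‖q.flip‖ * C) := by
    intro m q i
    refine (ContinuousLinearMap.opNorm_comp_le _ _).trans ?_
    gcongr
    exact q.flip.le_opNorm_of_le (hC i)
  obtain ⟨l', hl'⟩ := aux_lim2 (U : Filter ι) (fun i => M.l.comp (E.lmul.flip (e i))) _
    (bnd M.l E.lmul) (fun b x => by
      refine aux_conv (U : Filter ι) (fun i => (M.l.comp (E.lmul.flip (e i))) b)
        (‖M.l‖ * (‖E.lmul.flip‖ * C) * ‖b‖)
        (fun i => ContinuousLinearMap.le_of_opNorm_le _ (bnd M.l E.lmul i) b) x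
        fun ε hε => ?_
      obtain ⟨a, ha⟩ := near M.l hMl x ε hε
      exact ⟨_, _, ha, limL b a x⟩)
  obtain ⟨r', hr'⟩ := aux_lim2 (U : Filter ι) (fun i => M.r.comp (E.rmul.flip (e i))) _
    (bnd M.r E.rmul) (fun b x => by
      refine aux_conv (U : Filter ι) (fun i => (M.r.comp (E.rmul.flip (e i))) b)
        (‖M.r‖ * (‖E.rmul.flip‖ * C) * ‖b‖)
        (fun i => ContinuousLinearMap.le_of_opNorm_le _ (bnd M.r E.rmul i) b) x
        fun ε hε => ?_
      obtain ⟨a, ha⟩ := near M.r hMr x ε hε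
      exact ⟨_, _, ha, limR b a x⟩)
  have K1 : ∀ b a x, l' b (M.l a x) = M.l (E.lmul b a) x := fun b a x =>
    tendsto_nhds_unique (hl' b (M.l a x)) (limL b a x)
  have K3 : ∀ b a x, r' b (M.r a x) = M.r (E.rmul b a) x := fun b a x =>
    tendsto_nhds_unique (hr' b (M.r a x)) (limR b a x)
  have dl := fun (F G : X → X) => aux_dens U e M.l hMl F G
  have dr := fun (F G : X → X) => aux_dens U e M.r hMr F G
  have dlc := fun (F G : X → ℂ) => aux_dens U e M.l hMl F G
  -- mixed commutation
  have K5 : ∀ b a x, r' b (M.l a x) = M.l a (r' b x) := by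
    intro b a x
    refine dr (fun x => r' b (M.l a x)) (fun x => M.l a (r' b x)) (by fun_prop) (by fun_prop) ?_ x
    intro c x
    simp only [← M.l_r, K3]
  have K4 : ∀ b a x, M.r a (r' b x) = M.r (E.lmul b a) x := by
    intro b a x
    refine dr (fun x => M.r a (r' b x)) (fun x => M.r (E.lmul b a) x)
      (by fun_prop) (by fun_prop) ?_ x
    intro c x
    simp only [K3, ← M.r_mul, E.mid]
  let N : BanachBimodule B X :=
    { l := l'
      r := r'
      l_mul := by
        intro b c x
        refine dl (fun x => l' (b * c) x) (fun x => l' b (l' c x)) (by fun_prop) (by fun_prop) ?_ x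
        intro a x
        simp only [K1]
        congr 2
        exact E.incl_inj (by simp only [E.incl_lmul, mul_assoc])
      r_mul := by
        intro b c x
        refine dr (fun x => r' (b * c) x) (fun x => r' c (r' b x)) (by fun_prop) (by fun_prop) ?_ x
        intro a x
        simp only [K3]
        congr 2
        exact E.incl_inj (by simp only [E.incl_rmul, mul_assoc])
      l_r := by
        intro b c x
        refine dl (fun x => r' c (l' b x)) (fun x => l' b (r' c x)) (by fun_prop) (by fun_prop) ?_ x
        intro a x
        simp only [K1, K5] }
  -- the derivation
  obtain ⟨D', hD'⟩ := aux_ultra2 U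
    (fun i => D.comp (E.lmul.flip (e i)) - (ContinuousLinearMap.compL ℂ X X ℂ (D (e i))).comp r')
    (‖D‖ * (‖E.lmul.flip‖ * C) + (‖D‖ * C) * ‖r'‖)
    (fun i => by
      refine (norm_sub_le (D.comp (E.lmul.flip (e i)))
        ((ContinuousLinearMap.compL ℂ X X ℂ (D (e i))).comp r')).trans (add_le_add ?_ ?_)
      · refine (ContinuousLinearMap.opNorm_comp_le _ _).trans ?_
        gcongr
        exact E.lmul.flip.le_opNorm_of_le (hC i)
      · refine (ContinuousLinearMap.opNorm_comp_le _ _).trans ?_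
        gcongr
        exact (compL_bound _).trans (D.le_opNorm_of_le (hC i)))
  have P : ∀ b a x, D' b (M.l a x) = D (E.lmul b a) x - D a (r' b x) := by
    intro b a x
    refine tendsto_nhds_unique (hD' b (M.l a x)) ?_
    have h1 : ∀ i, (D.comp (E.lmul.flip (e i)) -
        (ContinuousLinearMap.compL ℂ X X ℂ (D (e i))).comp r') b (M.l a x)
        = D (E.lmul b (e i * a)) x - D (e i * a) (r' b x) := by
      intro i
      rw [E.lmul_mul, hD, hD (e i) a, K4, ← K5]
      simp
    simp only [h1]
    exact (((cD x).comp (E.lmul b).cont).tendsto a |>.comp (hl a)).sub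
      ((cD _).tendsto a |>.comp (hl a))
  have il : ∀ a, l' (E.incl a) = M.l a := by
    intro a
    ext x
    refine dl (fun x => l' (E.incl a) x) (fun x => M.l a x) (by fun_prop) (by fun_prop) ?_ x
    intro c x
    simp only [K1, ← M.l_mul]
    congr 2
    exact E.incl_inj (by simp only [E.incl_lmul, E.incl_mul])
  have ir : ∀ a, r' (E.incl a) = M.r a := by
    intro a
    ext x
    refine dr (fun x => r' (E.incl a) x) (fun x => M.r a x) (by fun_prop) (by fun_prop) ?_ x
    intro c x
    simp only [K3, ← M.r_mul]
    congr 2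
    exact E.incl_inj (by simp only [E.incl_rmul, E.incl_mul])
  refine ⟨N, D', ?_, il, ir, ?_⟩
  · intro b c x
    refine dlc (fun x => D' (b * c) x) (fun x => D' c (r' b x) + D' b (l' c x))
      (by fun_prop) (by fun_prop) ?_ x
    intro a x
    have h1 : E.lmul (b * c) a = E.lmul b (E.lmul c a) :=
      E.incl_inj (by simp only [E.incl_lmul, mul_assoc])
    have h2 : r' (b * c) x = r' c (r' b x) := N.r_mul b c x
    simp only [K1, K5, P, h1, h2]
    ring
  · intro a
    ext x
    refine dlc (fun x => D' (E.incl a) x) (fun x => D a x) (by fun_prop) (by fun_prop) ?_ x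
    intro c x
    have h1 : E.lmul (E.incl a) c = a * c :=
      E.incl_inj (by simp only [E.incl_lmul, E.incl_mul])
    simp only [P, h1, ir, hD a c x]
    ring

/-- The essential part of a bimodule. -/
def essPart (hC : ∀ i, ‖e i‖ ≤ C) (m : A →L[ℂ] X →L[ℂ] X) : Submodule ℂ X where
  carrier := {x | Tendsto (fun i => m (e i) x) U (𝓝 x)}
  zero_mem' := by simp
  add_mem' := fun {x y} hx hy => by
    simpa using Tendsto.add (show Tendsto _ _ _ from hx) (show Tendsto _ _ _ from hy)
  smul_mem' := fun c x hx => by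
    simpa using Tendsto.const_smul (show Tendsto _ _ _ from hx) c

theorem essPart_closed (hC : ∀ i, ‖e i‖ ≤ C) (m : A →L[ℂ] X →L[ℂ] X) :
    IsClosed (essPart U e C hC m : Set X) := by
  have hne : Nonempty ι := (U : Filter ι).nonempty_of_neBot
  have hC0 : 0 ≤ C := (norm_nonneg _).trans (hC hne.some)
  refine isClosed_of_closure_subset fun x hx => ?_
  show Tendsto (fun i => m (e i) x) U (𝓝 x)
  rw [Metric.tendsto_nhds]
  intro ε hε
  set K := ‖m‖ * C with hKdef
  have hK : 0 ≤ K := by positivity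
  obtain ⟨y, hy, hxy⟩ := Metric.mem_closure_iff.1 hx (ε / (2 * (K + 1))) (by positivity)
  have hy' : Tendsto (fun i => m (e i) y) U (𝓝 y) := hy
  filter_upwards [Metric.tendsto_nhds.1 hy' (ε / 2) (by positivity)] with i hi
  have h1 : dist (m (e i) x) (m (e i) y) ≤ K * dist x y := by
    rw [dist_eq_norm, dist_eq_norm, ← map_sub]
    exact (m (e i)).le_of_opNorm_le (m.le_opNorm_of_le (hC i)) _
  have h2 : (K + 1) * dist x y < ε / 2 := by
    have := mul_lt_mul_of_pos_left hxy (show 0 < K + 1 by linarith)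
    have h3 : (K + 1) * (ε / (2 * (K + 1))) = ε / 2 := by field_simp
    linarith
  have h4 := dist_triangle4 (m (e i) x) (m (e i) y) y x
  rw [dist_comm y x] at h4
  linarith

/-- Restrict a bilinear action to an invariant subspace. -/
def restrAct (m : A →L[ℂ] X →L[ℂ] X) (Y : Submodule ℂ X) (h : ∀ a, ∀ x ∈ Y, m a x ∈ Y) :
    A →L[ℂ] Y →L[ℂ] Y :=
  LinearMap.mkContinuous₂
    (LinearMap.mk₂ ℂ (fun a (x : Y) => (⟨m a x, h a x x.2⟩ : Y))
      (fun a b x => by ext; simp) (fun c a x => by ext; simp)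
      (fun a x y => by ext; simp) (fun c a x => by ext; simp))
    ‖m‖ (fun a x => m.le_opNorm₂ a x)

@[simp] theorem restrAct_apply (m : A →L[ℂ] X →L[ℂ] X) (Y : Submodule ℂ X)
    (h : ∀ a, ∀ x ∈ Y, m a x ∈ Y) (a : A) (x : Y) : (restrAct m Y h a x : X) = m a x := rfl

end bai

open Filter Topology in
theorem statement15 (E : Envelope A B) (hBAI : HasBAI A)
    (hB : IsApproxAmenable.{u} B) : IsApproxAmenable.{u} A := by
  intro X _ _ _ M D hD0
  obtain ⟨ι, p, e, hp, ⟨C, hC⟩, he⟩ := hBAI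
  let U : Ultrafilter ι := Ultrafilter.of p
  have hU : (U : Filter ι) ≤ p := Ultrafilter.of_le p
  have hl : ∀ a, Tendsto (fun i => e i * a) U (𝓝 a) := fun a => (he a).1.mono_left hU
  have hr : ∀ a, Tendsto (fun i => a * e i) U (𝓝 a) := fun a => (he a).2.mono_left hU
  have hD : IsDer M D := fun b c x => by rw [hD0]; simp
  have cl : ∀ x, Continuous fun a => M.l a x := fun x =>
    (ContinuousLinearMap.apply ℂ X x).cont.comp M.l.cont
  have cr : ∀ x, Continuous fun a => M.r a x := fun x =>
    (ContinuousLinearMap.apply ℂ X x).cont.comp M.r.cont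
  let Y : Submodule ℂ X := essPart U e C hC M.l ⊓ essPart U e C hC M.r
  have memY : ∀ x, x ∈ Y ↔ Tendsto (fun i => M.l (e i) x) U (𝓝 x) ∧
      Tendsto (fun i => M.r (e i) x) U (𝓝 x) := fun x => Iff.rfl
  have hYc : IsClosed (Y : Set X) :=
    (essPart_closed U e C hC M.l).inter (essPart_closed U e C hC M.r)
  have : CompleteSpace Y := hYc.completeSpace_coe
  have gl : ∀ a x, Tendsto (fun i => M.l (e i) (M.l a x)) U (𝓝 (M.l a x)) := by
    intro a x
    simp only [← M.l_mul]
    exact ((cl x).tendsto a).comp (hl a)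
  have gr : ∀ a x, Tendsto (fun i => M.r (e i) (M.r a x)) U (𝓝 (M.r a x)) := by
    intro a x
    simp only [← M.r_mul]
    exact ((cr x).tendsto a).comp (hr a)
  have Yl : ∀ a, ∀ x ∈ Y, M.l a x ∈ Y := by
    intro a x hx
    refine (memY _).2 ⟨gl a x, ?_⟩
    simp only [M.l_r]
    exact ((M.l a).cont.tendsto x).comp ((memY x).1 hx).2
  have Yr : ∀ a, ∀ x ∈ Y, M.r a x ∈ Y := by
    intro a x hx
    refine (memY _).2 ⟨?_, gr a x⟩
    simp only [← M.l_r]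
    exact ((M.r a).cont.tendsto x).comp ((memY x).1 hx).1
  have Ylr : ∀ a b x, M.l a (M.r b x) ∈ Y := by
    intro a b x
    refine (memY _).2 ⟨gl _ _, ?_⟩
    rw [← M.l_r]
    exact gr _ _
  let MY : BanachBimodule A Y :=
    { l := restrAct M.l Y Yl
      r := restrAct M.r Y Yr
      l_mul := fun a b x => Subtype.ext (M.l_mul a b x)
      r_mul := fun a b x => Subtype.ext (M.r_mul a b x)
      l_r := fun a b x => Subtype.ext (M.l_r a b x) }
  let DY : A →L[ℂ] Y →L[ℂ] ℂ := ((ContinuousLinearMap.compL ℂ Y X ℂ).flip Y.subtypeL).comp D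
  have hDY : IsDer MY DY := fun b c x => hD b c x
  obtain ⟨N, D', hD', il, ir, iD⟩ := aux_ess U e C hl hr hC E MY
    (fun x => tendsto_subtype_rng.2 ((memY x).1 x.2).1)
    (fun x => tendsto_subtype_rng.2 ((memY x).1 x.2).2) DY hDY
  obtain ⟨κ, q, hq, ψ, hψ⟩ := hB Y N D' (fun b c => by ext x; exact hD' b c x)
  have hext : ∀ γ, ∃ Ψ : X →L[ℂ] ℂ, ∀ x : Y, Ψ x = ψ γ x := fun γ => by
    obtain ⟨g, hg, -⟩ := exists_extension_norm_eq Y (ψ γ)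
    exact ⟨g, hg⟩
  choose Ψ hΨ using hext
  obtain ⟨K, hK, hred⟩ := aux_reduce U e C hl hr hC M
  have hη := fun γ => hred (D - adj M (Ψ γ)) (hD.sub_adj _)
  choose η hη using hη
  refine ⟨κ, q, hq, fun γ => Ψ γ + η γ, fun a => ?_⟩
  have hψa := hψ (E.incl a)
  rw [tendsto_iff_norm_sub_tendsto_zero] at hψa ⊢
  have hlim := hψa.mul_const K
  rw [zero_mul] at hlim
  refine squeeze_zero (fun _ => norm_nonneg _) (fun γ => ?_) hlim
  have key := hη γ a _ (norm_nonneg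
    ((ψ γ).comp (N.r (E.incl a)) - (ψ γ).comp (N.l (E.incl a)) - D' (E.incl a))) (by
      intro i j x
      have h1 := ContinuousLinearMap.le_opNorm ((ψ γ).comp (N.r (E.incl a)) -
        (ψ γ).comp (N.l (E.incl a)) - D' (E.incl a)) (⟨_, Ylr (e i) (e j) x⟩ : Y)
      refine le_trans (le_of_eq ?_) h1
      rw [← norm_neg, il, ir, iD]
      congr 1
      simp only [ContinuousLinearMap.sub_apply, adj_apply, ContinuousLinearMap.comp_apply, ← hΨ]
      rw [neg_sub]
      rfl)
  refine le_trans (le_of_eq ?_) key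
  rw [← norm_neg]
  congr 1
  ext x
  simp only [ContinuousLinearMap.sub_apply, adj_apply, ContinuousLinearMap.comp_apply,
    ContinuousLinearMap.add_apply, ContinuousLinearMap.neg_apply]
  ring
end
end
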